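/- arXiv:2404.11693 — 3 statements merged into one kernel-verified Lean document; each statement's English description precedes it below -/
import Mathlib

section
/- Assume (φ1)–(φ3), let V(t) = Φ(|t² − α²|), and let q be a heteroclinic solution of problem (P). If l − 1 ≤ 1 ≤ m − 1, then α·tanh(αt/(m−1)) ≤ q(t) ≤ α·tanh(αt/(l−1)) for all t ≥ 0. -/
/-!
The equation is conservative. Put `f s = s φ(|s|)`, so that `Φ' = f`, and let
`H(s) = s f(s) - Φ(s)` be the Legendre-type transform of `Φ`. Along a solution
`H(q') - V(q)` is constant, and the constant is zero: `q(t) → α` makes `V(q) → 0`, while the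
mean value theorem on `[n, n + 1]` yields times tending to infinity at which `q' → 0`. Hence
`H(|q'|) = Φ(|q² - α²|)`.

Integrating (φ2) gives `(l - 1) Φ ≤ H ≤ (m - 1) Φ` on `[0, ∞)`. Since `Φ` is convex, vanishes
at `0` and is strictly increasing there, and since `l - 1 ≤ 1 ≤ m - 1`, the factors can be moved
inside `Φ`, giving `(l - 1) |q'| ≤ |q² - α²| ≤ (m - 1) |q'|`.

The left inequality and a Grönwall argument show that `q² - α²` never vanishes on `[0, ∞)`, so
`q² < α²` there; the right one then shows that `q'` never vanishes, and `q(0) = 0`, `q → α` force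
`q' > 0`. Finally `log (α + q) - log (α - q)` has derivative `2 α q' / (α² - q²)`, which lies between
`2 α / (m - 1)` and `2 α / (l - 1)`; integrating this from `0` is the claim.
-/

open Real Filter Set MeasureTheory

noncomputable def Phi (φ : ℝ → ℝ) (t : ℝ) : ℝ := ∫ s in (0:ℝ)..|t|, s * φ s

def IsClassicalSolution (φ V q : ℝ → ℝ) : Prop :=
  Differentiable ℝ q ∧
  ∀ t : ℝ, HasDerivAt
    (fun s => if deriv q s = 0 then 0 else φ |deriv q s| * deriv q s)
    (deriv V (q t)) t

def IsHeteroclinic (φ V : ℝ → ℝ) (α : ℝ) (q : ℝ → ℝ) : Prop :=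
  IsClassicalSolution φ V q ∧ Differentiable ℝ (deriv q) ∧ Continuous (deriv q) ∧
  q 0 = 0 ∧ Tendsto q atTop (nhds α) ∧ Tendsto q atBot (nhds (-α))

/-! ### The flux and its primitive `Φ` -/

/-- The odd extension `s ↦ s φ(|s|)` of the flux `φ(s) s`; its value at `0` is `0` whatever
`φ 0` is. -/
noncomputable def flux (φ : ℝ → ℝ) (s : ℝ) : ℝ := s * φ |s|

/-- The function `H(s) = s f(s) - Φ(s)`, with `f` the flux, occurring in the first integral
`H(q') - V(q)`. -/
noncomputable def energyH (φ : ℝ → ℝ) (s : ℝ) : ℝ := s * flux φ s - Phi φ s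

lemma Phi_zero (φ : ℝ → ℝ) : Phi φ 0 = 0 := by simp [Phi]

lemma Phi_abs (φ : ℝ → ℝ) (t : ℝ) : Phi φ |t| = Phi φ t := by simp [Phi]

lemma energyH_abs (φ : ℝ → ℝ) (t : ℝ) : energyH φ |t| = energyH φ t := by
  rcases abs_choice t with h | h <;> rw [energyH, Phi_abs, energyH, flux, flux, abs_abs, h]
  ring

lemma flux_continuous {φ : ℝ → ℝ} (hc : ContinuousOn φ (Set.Ioi 0))
    (hφpos : ∀ t > 0, 0 < φ t)
    (hφ3 : ∃ c₁ c₂ δ₀ r : ℝ, 0 < c₁ ∧ 0 < c₂ ∧ 0 < δ₀ ∧ 1 < r ∧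
      ∀ t : ℝ, 0 < t → t ≤ δ₀ → c₁ * t ^ (r - 1) ≤ φ t * t ∧ φ t * t ≤ c₂ * t ^ (r - 1)) :
    Continuous (flux φ) := by
  rw [continuous_iff_continuousAt]
  intro x
  rcases eq_or_ne x 0 with rfl | hx
  · obtain ⟨c₁, c₂, δ₀, r, -, hc₂, hδ, hr, h⟩ := hφ3
    have h0 : flux φ 0 = 0 := by simp [flux]
    rw [ContinuousAt, h0]
    have hlim : Tendsto (fun s : ℝ => c₂ * |s| ^ (r - 1)) (nhds 0) (nhds 0) := by
      have : Continuous (fun s : ℝ => c₂ * |s| ^ (r - 1)) :=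
        continuous_const.mul (continuous_abs.rpow_const (fun _ => Or.inr (by linarith)))
      have h2 := this.tendsto 0
      rwa [abs_zero, Real.zero_rpow (by linarith), mul_zero] at h2
    refine squeeze_zero_norm' ?_ hlim
    filter_upwards [Metric.ball_mem_nhds (0:ℝ) hδ] with s hs
    rw [Metric.mem_ball, dist_zero_right, Real.norm_eq_abs] at hs
    rcases eq_or_ne s 0 with rfl | hs0
    · simp [flux]; positivity
    · have hp := abs_pos.2 hs0
      rw [flux, norm_mul, Real.norm_eq_abs, Real.norm_eq_abs, abs_of_pos (hφpos _ hp), mul_comm]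
      exact (h _ hp hs.le).2
  · have h1 : ContinuousAt φ |x| := hc.continuousAt (Ioi_mem_nhds (abs_pos.2 hx))
    exact continuousAt_id.mul (h1.comp continuous_abs.continuousAt)

/-- The integral defining `Φ` runs to `|t|`; oddness of the flux turns it into a primitive on
all of `ℝ`. -/
lemma Phi_hasDerivAt {φ : ℝ → ℝ} (hf : Continuous (flux φ)) (t : ℝ) :
    HasDerivAt (Phi φ) (flux φ t) t := by
  have key : Phi φ = fun t => ∫ s in (0:ℝ)..t, flux φ s := by
    have hpos : ∀ t : ℝ, 0 ≤ t → ∫ s in (0:ℝ)..t, s * φ s = ∫ s in (0:ℝ)..t, flux φ s := by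
      intro t ht
      refine intervalIntegral.integral_congr fun s hs => ?_
      rw [Set.uIcc_of_le ht] at hs
      simp [flux, abs_of_nonneg hs.1]
    funext t
    rcases le_total 0 t with ht | ht
    · rw [Phi, abs_of_nonneg ht, hpos t ht]
    · rw [Phi, abs_of_nonpos ht, hpos (-t) (by linarith)]
      have := intervalIntegral.integral_comp_neg (a := 0) (b := t) (flux φ)
      have h2 : ∀ s, flux φ (-s) = - flux φ s := by intro s; simp [flux]
      simp only [neg_zero, h2, intervalIntegral.integral_neg] at this
      rw [intervalIntegral.integral_symm (-t) 0, ← this, neg_neg]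
  rw [key]
  exact intervalIntegral.integral_hasDerivAt_right (hf.intervalIntegrable _ _)
    (hf.stronglyMeasurableAtFilter _ _) hf.continuousAt

lemma flux_hasDerivAt {φ : ℝ → ℝ} (hφC1 : ContDiffOn ℝ 1 φ (Set.Ioi 0)) {t : ℝ} (ht : 0 < t) :
    HasDerivAt (flux φ) (deriv (fun s => φ s * s) t) t := by
  have hd : DifferentiableAt ℝ φ t :=
    (hφC1.differentiableOn (by norm_num)).differentiableAt (Ioi_mem_nhds ht)
  have h1 : HasDerivAt (fun s => φ s * s) (deriv (fun s => φ s * s) t) t :=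
    (hd.mul differentiableAt_id).hasDerivAt
  refine h1.congr_of_eventuallyEq ?_
  filter_upwards [Ioi_mem_nhds ht] with s hs
  rw [flux, abs_of_pos hs, mul_comm]

lemma flux_pos {φ : ℝ → ℝ} (hφpos : ∀ t > 0, 0 < φ t) {t : ℝ} (ht : 0 < t) : 0 < flux φ t := by
  rw [flux, abs_of_pos ht]; exact mul_pos ht (hφpos t ht)

lemma Phi_strictMonoOn {φ : ℝ → ℝ} (hf : Continuous (flux φ)) (hφpos : ∀ t > 0, 0 < φ t) :
    StrictMonoOn (Phi φ) (Set.Ici 0) := by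
  refine strictMonoOn_of_deriv_pos (convex_Ici 0)
    (fun t _ => (Phi_hasDerivAt hf t).continuousAt.continuousWithinAt) fun t ht => ?_
  rw [interior_Ici] at ht
  rw [(Phi_hasDerivAt hf t).deriv]
  exact flux_pos hφpos ht

/-- Convexity of `Φ` on `[0, ∞)` together with `Φ(0) = 0`. -/
lemma Phi_mul_le {φ : ℝ → ℝ} (hφC1 : ContDiffOn ℝ 1 φ (Set.Ioi 0))
    (hφ1 : ∀ t > 0, 0 < deriv (fun s => φ s * s) t) (hf : Continuous (flux φ))
    {c x : ℝ} (hc0 : 0 ≤ c) (hc1 : c ≤ 1) (hx : 0 ≤ x) :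
    Phi φ (c * x) ≤ c * Phi φ x := by
  have hmono : StrictMonoOn (flux φ) (Set.Ici 0) := by
    refine strictMonoOn_of_deriv_pos (convex_Ici 0) hf.continuousOn fun t ht => ?_
    rw [interior_Ici] at ht
    rw [(flux_hasDerivAt hφC1 ht).deriv]
    exact hφ1 t ht
  have hconv : ConvexOn ℝ (Set.Ici 0) (Phi φ) := by
    refine MonotoneOn.convexOn_of_deriv (convex_Ici 0)
      (fun t _ => (Phi_hasDerivAt hf t).continuousAt.continuousWithinAt)
      (fun t _ => (Phi_hasDerivAt hf t).differentiableAt.differentiableWithinAt) ?_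
    have : deriv (Phi φ) = flux φ := funext fun t => (Phi_hasDerivAt hf t).deriv
    rw [this, interior_Ici]
    exact hmono.monotoneOn.mono Set.Ioi_subset_Ici_self
  have := hconv.2 (x := x) (y := 0) hx (Set.mem_Ici.2 le_rfl) hc0 (sub_nonneg.2 hc1) (by ring)
  simpa [Phi_zero] using this

/-! ### Bounds on the transform `H` -/

lemma energyH_continuous {φ : ℝ → ℝ} (hf : Continuous (flux φ)) : Continuous (energyH φ) :=
  (continuous_id.mul hf).sub
    (continuous_iff_continuousAt.2 fun t => (Phi_hasDerivAt hf t).continuousAt)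

lemma energyH_sub_hasDerivAt {φ : ℝ → ℝ} (hφC1 : ContDiffOn ℝ 1 φ (Set.Ioi 0))
    (hf : Continuous (flux φ)) (c : ℝ) {t : ℝ} (ht : 0 < t) :
    HasDerivAt (fun s => energyH φ s - c * Phi φ s)
      (t * (deriv (fun s => φ s * s) t - c * φ t)) t := by
  have h := (((hasDerivAt_id t).mul (flux_hasDerivAt hφC1 ht)).sub (Phi_hasDerivAt hf t)).sub
    ((Phi_hasDerivAt hf t).const_mul c)
  refine h.congr_deriv ?_
  simp only [flux, abs_of_pos ht, id]
  ring

/-- The integrated form of (φ2): `(l - 1) Φ ≤ H ≤ (m - 1) Φ` on `[0, ∞)`. -/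
lemma energyH_bounds {φ : ℝ → ℝ} {l m : ℝ} (hφC1 : ContDiffOn ℝ 1 φ (Set.Ioi 0))
    (hφpos : ∀ t > 0, 0 < φ t) (hf : Continuous (flux φ))
    (hφ2 : ∀ t > 0, l - 1 ≤ deriv (fun s => φ s * s) t / φ t ∧
      deriv (fun s => φ s * s) t / φ t ≤ m - 1) {s : ℝ} (hs : 0 ≤ s) :
    (l - 1) * Phi φ s ≤ energyH φ s ∧ energyH φ s ≤ (m - 1) * Phi φ s := by
  have h0 : energyH φ 0 = 0 := by simp [energyH, Phi_zero]
  have hcont : ∀ c : ℝ, Continuous fun s => energyH φ s - c * Phi φ s := fun c =>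
    (energyH_continuous hf).sub (continuous_const.mul
      (continuous_iff_continuousAt.2 fun t => (Phi_hasDerivAt hf t).continuousAt))
  constructor
  · have hm : MonotoneOn (fun s => energyH φ s - (l - 1) * Phi φ s) (Set.Ici 0) := by
      refine monotoneOn_of_deriv_nonneg (convex_Ici 0) (hcont _).continuousOn ?_ ?_ <;>
        rw [interior_Ici]
      · exact fun t ht =>
          (energyH_sub_hasDerivAt hφC1 hf _ ht).differentiableAt.differentiableWithinAt
      · intro t ht
        rw [(energyH_sub_hasDerivAt hφC1 hf _ ht).deriv]
        have := (le_div_iff₀ (hφpos t ht)).1 (hφ2 t ht).1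
        exact mul_nonneg (le_of_lt ht) (by linarith)
    have := hm (Set.mem_Ici.2 le_rfl) hs hs
    simp only [h0, Phi_zero] at this
    linarith
  · have hm : AntitoneOn (fun s => energyH φ s - (m - 1) * Phi φ s) (Set.Ici 0) := by
      refine antitoneOn_of_deriv_nonpos (convex_Ici 0) (hcont _).continuousOn ?_ ?_ <;>
        rw [interior_Ici]
      · exact fun t ht =>
          (energyH_sub_hasDerivAt hφC1 hf _ ht).differentiableAt.differentiableWithinAt
      · intro t ht
        rw [(energyH_sub_hasDerivAt hφC1 hf _ ht).deriv]
        have := (div_le_iff₀ (hφpos t ht)).1 (hφ2 t ht).2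
        exact mul_nonpos_of_nonneg_of_nonpos (le_of_lt ht) (by linarith)
    have := hm (Set.mem_Ici.2 le_rfl) hs hs
    simp only [h0, Phi_zero] at this
    linarith

/-! ### The first integral -/

/-- A function converging at `+∞` has derivative tending to `0` along some sequence of times
tending to `+∞`. -/
lemma exists_seq_deriv_tendsto_zero {q : ℝ → ℝ} {a : ℝ} (hq : Differentiable ℝ q)
    (hlim : Tendsto q atTop (nhds a)) :
    ∃ τ : ℕ → ℝ, Tendsto τ atTop atTop ∧ Tendsto (fun n => deriv q (τ n)) atTop (nhds 0) := by
  have h : ∀ n : ℕ, ∃ c ∈ Set.Ioo (n:ℝ) (n + 1), deriv q c = (q (n + 1) - q n) / ((n + 1) - n) :=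
    fun n => exists_deriv_eq_slope q (by linarith) hq.continuous.continuousOn hq.differentiableOn
  choose τ hτ hd using h
  refine ⟨τ, tendsto_atTop_mono (fun n => (hτ n).1.le) tendsto_natCast_atTop_atTop, ?_⟩
  have h1 : Tendsto (fun n : ℕ => q n) atTop (nhds a) := hlim.comp tendsto_natCast_atTop_atTop
  have h2 : Tendsto (fun n : ℕ => q ((n:ℝ) + 1)) atTop (nhds a) :=
    hlim.comp (tendsto_natCast_atTop_atTop.atTop_add tendsto_const_nhds)
  have h3 := h2.sub h1
  rw [sub_self] at h3
  refine h3.congr fun n => ?_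
  rw [hd n]; simp

/-- The first integral of the equation, with vanishing constant. -/
lemma energy_identity {φ q : ℝ → ℝ} {α : ℝ} (hf : Continuous (flux φ))
    (hq : IsHeteroclinic φ (fun t => Phi φ |t ^ 2 - α ^ 2|) α q) (t : ℝ) :
    energyH φ (deriv q t) = Phi φ (q t ^ 2 - α ^ 2) := by
  obtain ⟨⟨hqd, heq⟩, hq2, hqc, -, hlim, -⟩ := hq
  simp only [Phi_abs] at heq
  have hw : (fun s => if deriv q s = 0 then 0 else φ |deriv q s| * deriv q s)
      = fun s => flux φ (deriv q s) := by
    funext s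
    split_ifs with h
    · simp [flux, h]
    · rw [flux, mul_comm]
  rw [hw] at heq
  have hV : ∀ x, DifferentiableAt ℝ (fun t => Phi φ (t ^ 2 - α ^ 2)) x := fun x =>
    DifferentiableAt.comp x (g := Phi φ) (f := fun t => t ^ 2 - α ^ 2)
      (Phi_hasDerivAt hf (x ^ 2 - α ^ 2)).differentiableAt (by fun_prop)
  have hder : ∀ t, HasDerivAt
      (fun s => energyH φ (deriv q s) - Phi φ (q s ^ 2 - α ^ 2)) 0 t := by
    intro t
    have h1 := (hq2 t).hasDerivAt
    have h2 := (Phi_hasDerivAt hf (deriv q t)).comp t h1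
    have h3 := (hV (q t)).hasDerivAt.comp t (hqd t).hasDerivAt
    refine (((h1.mul (heq t)).sub h2).sub h3).congr_deriv ?_
    ring
  have hconst : ∀ s, energyH φ (deriv q s) - Phi φ (q s ^ 2 - α ^ 2)
      = energyH φ (deriv q t) - Phi φ (q t ^ 2 - α ^ 2) := fun s =>
    is_const_of_deriv_eq_zero (fun x => (hder x).differentiableAt) (fun x => (hder x).deriv) s t
  obtain ⟨τ, hτ, hτd⟩ := exists_seq_deriv_tendsto_zero hqd hlim
  have hl1 := ((energyH_continuous hf).tendsto 0).comp hτd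
  have hl2 := ((hV α).continuousAt.tendsto).comp (hlim.comp hτ)
  have hl3 := hl1.sub hl2
  have hl4 : Tendsto (fun _ : ℕ => energyH φ (deriv q t) - Phi φ (q t ^ 2 - α ^ 2)) atTop
      (nhds (energyH φ 0 - Phi φ (α ^ 2 - α ^ 2))) :=
    hl3.congr fun n => hconst (τ n)
  have := tendsto_nhds_unique hl4 tendsto_const_nhds
  simp only [sub_self, Phi_zero, energyH, zero_mul] at this
  rw [energyH]
  linarith

/-! ### Scalar comparison -/

/-- Grönwall: if `c |q'| ≤ |q² - a²|` with `c > 0` and `q(0) = 0`, then `q` cannot reach `±a` at a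
nonnegative time. -/
lemma sq_lt_sq_of_deriv_bound {q : ℝ → ℝ} {a c : ℝ} (ha : 0 < a) (hc : 0 < c)
    (hqd : Differentiable ℝ q) (h0 : q 0 = 0)
    (hb : ∀ t, c * |deriv q t| ≤ |q t ^ 2 - a ^ 2|) {T : ℝ} (hT : 0 ≤ T) :
    q T ^ 2 < a ^ 2 := by
  have hne : ∀ T, 0 ≤ T → q T ^ 2 - a ^ 2 ≠ 0 := by
    intro T hT hz
    obtain ⟨M, hM⟩ := isCompact_Icc.exists_bound_of_continuousOn
      (s := Set.Icc 0 T) hqd.continuous.continuousOn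
    -- `K` bounds the logarithmic derivative of `(q² - a²)²` on `[0, T]`.
    set K := 4 * M / c with hK
    have hder : ∀ t, HasDerivAt (fun s => (q s ^ 2 - a ^ 2) ^ 2 * Real.exp (K * s))
        ((4 * (q t ^ 2 - a ^ 2) * q t * deriv q t + K * (q t ^ 2 - a ^ 2) ^ 2)
          * Real.exp (K * t)) t := by
      intro t
      have h1 := ((((hqd t).hasDerivAt.pow 2).sub_const (a ^ 2)).pow 2).mul
        (((hasDerivAt_id t).const_mul K).exp)
      refine h1.congr_deriv ?_
      simp
      ring
    have hmono : MonotoneOn (fun s => (q s ^ 2 - a ^ 2) ^ 2 * Real.exp (K * s))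
        (Set.Icc 0 T) := by
      refine monotoneOn_of_deriv_nonneg (convex_Icc 0 T)
        (fun t _ => (hder t).continuousAt.continuousWithinAt)
        (fun t _ => (hder t).differentiableAt.differentiableWithinAt) fun t ht => ?_
      rw [(hder t).deriv]
      refine mul_nonneg ?_ (Real.exp_pos _).le
      have hMt := hM t (interior_subset ht)
      rw [Real.norm_eq_abs] at hMt
      have hM0 : 0 ≤ M := (abs_nonneg _).trans hMt
      have hd : |deriv q t| ≤ |q t ^ 2 - a ^ 2| / c := by
        rw [le_div_iff₀ hc, mul_comm]; exact hb t
      have hab : |4 * (q t ^ 2 - a ^ 2) * q t * deriv q t| ≤ K * (q t ^ 2 - a ^ 2) ^ 2 := by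
        rw [abs_mul, abs_mul, abs_mul, abs_of_pos (by norm_num : (0:ℝ) < 4)]
        calc 4 * |q t ^ 2 - a ^ 2| * |q t| * |deriv q t|
            ≤ 4 * |q t ^ 2 - a ^ 2| * M * (|q t ^ 2 - a ^ 2| / c) := by gcongr
          _ = K * |q t ^ 2 - a ^ 2| ^ 2 := by rw [hK]; ring
          _ = K * (q t ^ 2 - a ^ 2) ^ 2 := by rw [sq_abs]
      have := neg_abs_le (4 * (q t ^ 2 - a ^ 2) * q t * deriv q t)
      linarith
    have := hmono (Set.left_mem_Icc.2 hT) (Set.right_mem_Icc.2 hT) hT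
    simp only [hz, h0] at this
    have hpos : 0 < a ^ 4 := by positivity
    norm_num at this
    nlinarith
  by_contra! hcon
  obtain ⟨t, ht, hzt⟩ := intermediate_value_Icc hT
    (f := fun s => q s ^ 2 - a ^ 2) (by have := hqd.continuous; fun_prop)
    (show (0:ℝ) ∈ Set.Icc (q 0 ^ 2 - a ^ 2) (q T ^ 2 - a ^ 2) from
      ⟨by rw [h0]; nlinarith, by linarith⟩)
  exact hne t ht.1 hzt

lemma le_mul_tanh_iff {a x y : ℝ} (h1 : 0 < a - y) (h2 : 0 < a + y) :
    (y ≤ a * Real.tanh x ↔ Real.log (a + y) - Real.log (a - y) ≤ 2 * x) ∧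
    (a * Real.tanh x ≤ y ↔ 2 * x ≤ Real.log (a + y) - Real.log (a - y)) := by
  have hE : Real.exp (2 * x) = Real.exp x ^ 2 := by rw [← Real.exp_nat_mul]; norm_num
  have hx := Real.exp_pos x
  have ht : a * Real.tanh x = a * (Real.exp x ^ 2 - 1) / (Real.exp x ^ 2 + 1) := by
    rw [Real.tanh_eq_sinh_div_cosh, Real.sinh_eq, Real.cosh_eq, Real.exp_neg]
    field_simp
  rw [← Real.log_div h2.ne' h1.ne', Real.log_le_iff_le_exp (by positivity),
    Real.le_log_iff_exp_le (by positivity), hE, ht, div_le_iff₀ h1, le_div_iff₀ h1,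
    le_div_iff₀ (by positivity), div_le_iff₀ (by positivity)]
  constructor <;> constructor <;> intro h <;> nlinarith

/-! ### The hyperbolic tangent bounds -/

theorem statement4 (φ : ℝ → ℝ) (l m α : ℝ) (q : ℝ → ℝ)
    (hφC1 : ContDiffOn ℝ 1 φ (Set.Ioi 0))
    (hφpos : ∀ t > 0, 0 < φ t)
    (hφ1 : ∀ t > 0, 0 < deriv (fun s => φ s * s) t)
    (hl : 1 < l) (hlm : l ≤ m)
    (hφ2 : ∀ t > 0, l - 1 ≤ deriv (fun s => φ s * s) t / φ t ∧
      deriv (fun s => φ s * s) t / φ t ≤ m - 1)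
    (hφ3 : ∃ c₁ c₂ δ₀ r : ℝ, 0 < c₁ ∧ 0 < c₂ ∧ 0 < δ₀ ∧ 1 < r ∧
      ∀ t : ℝ, 0 < t → t ≤ δ₀ → c₁ * t ^ (r - 1) ≤ φ t * t ∧ φ t * t ≤ c₂ * t ^ (r - 1))
    (hα : 0 < α)
    (hq : IsHeteroclinic φ (fun t => Phi φ |t ^ 2 - α ^ 2|) α q)
    (hcase : l - 1 ≤ 1 ∧ 1 ≤ m - 1) :
    ∀ t : ℝ, 0 ≤ t →
      α * Real.tanh (α * t / (m - 1)) ≤ q t ∧ q t ≤ α * Real.tanh (α * t / (l - 1)) := by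
  have hl0 : 0 < l - 1 := by linarith
  have hm0 : 0 < m - 1 := by linarith
  have hf := flux_continuous hφC1.continuousOn hφpos hφ3
  have hmono := Phi_strictMonoOn hf hφpos
  have hid := energy_identity hf hq
  obtain ⟨⟨hqd, -⟩, -, hqc, hq0, hlim, -⟩ := hq
  have hH : ∀ t, (l - 1) * Phi φ |deriv q t| ≤ Phi φ |q t ^ 2 - α ^ 2| ∧
      Phi φ |q t ^ 2 - α ^ 2| ≤ (m - 1) * Phi φ |deriv q t| := by
    intro t
    rw [Phi_abs φ (q t ^ 2 - α ^ 2), ← hid t, ← energyH_abs]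
    exact energyH_bounds hφC1 hφpos hf hφ2 (abs_nonneg _)
  have hup : ∀ t, (l - 1) * |deriv q t| ≤ |q t ^ 2 - α ^ 2| := by
    intro t
    have ha := abs_nonneg (deriv q t)
    refine (hmono.le_iff_le (Set.mem_Ici.2 (by positivity))
      (Set.mem_Ici.2 (abs_nonneg _))).1 ?_
    exact (Phi_mul_le hφC1 hφ1 hf hl0.le hcase.1 ha).trans (hH t).1
  have hlow : ∀ t, |q t ^ 2 - α ^ 2| ≤ (m - 1) * |deriv q t| := by
    intro t
    have hb := abs_nonneg (q t ^ 2 - α ^ 2)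
    rw [← inv_mul_le_iff₀ hm0]
    refine (hmono.le_iff_le (Set.mem_Ici.2 (by positivity))
      (Set.mem_Ici.2 (abs_nonneg _))).1 ?_
    refine (Phi_mul_le hφC1 hφ1 hf (inv_nonneg.2 hm0.le)
      (inv_le_one_of_one_le₀ hcase.2) hb).trans ?_
    rw [inv_mul_le_iff₀ hm0]
    exact (hH t).2
  have hsq : ∀ t, 0 ≤ t → q t ^ 2 < α ^ 2 := fun t ht =>
    sq_lt_sq_of_deriv_bound hα hl0 hqd hq0 hup ht
  have hne : ∀ t, 0 ≤ t → deriv q t ≠ 0 := by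
    intro t ht h
    have h1 := hlow t
    rw [h, abs_zero, mul_zero] at h1
    have h2 := abs_nonpos_iff.1 h1
    linarith [hsq t ht]
  -- If `q'` were negative somewhere it would be negative on all of `[0, ∞)`, and then `q ≤ 0`
  -- could not tend to `α > 0`.
  have hpos : ∀ t, 0 ≤ t → 0 < deriv q t := by
    by_contra! hcon
    obtain ⟨t₀, ht₀, hneg⟩ := hcon
    have hallneg : ∀ t, 0 ≤ t → deriv q t < 0 := by
      intro t ht
      by_contra! hge
      obtain ⟨x, hx, hx0⟩ := isPreconnected_Ici.intermediate_value (a := t₀) (b := t)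
        (s := Set.Ici (0:ℝ)) ht₀ ht hqc.continuousOn
        (show (0:ℝ) ∈ Set.Icc _ _ from ⟨hneg, hge⟩)
      exact hne x hx hx0
    have hanti : AntitoneOn q (Set.Ici 0) := by
      refine antitoneOn_of_deriv_nonpos (convex_Ici 0) hqd.continuous.continuousOn
        hqd.differentiableOn fun t ht => (hallneg t (interior_subset ht)).le
    have : α ≤ 0 := le_of_tendsto hlim (by
      filter_upwards [eventually_ge_atTop 0] with t ht
      simpa [hq0] using hanti (Set.mem_Ici.2 le_rfl) ht ht)
    linarith
  have hfac : ∀ t, 0 ≤ t → 0 < α - q t ∧ 0 < α + q t := by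
    intro t ht
    have := abs_lt.1 (abs_lt_of_sq_lt_sq (hsq t ht) hα.le)
    constructor <;> linarith [this.1, this.2]
  have hLd : ∀ t, 0 ≤ t → ∀ c : ℝ, HasDerivAt
      (fun s => Real.log (α + q s) - Real.log (α - q s) - c * s)
      (2 * α * (deriv q t / (α ^ 2 - q t ^ 2)) - c) t := by
    intro t ht c
    obtain ⟨h1, h2⟩ := hfac t ht
    have hd := (hqd t).hasDerivAt
    have h := (((hd.const_add α).log h2.ne').sub ((hd.const_sub α).log h1.ne')).sub
      ((hasDerivAt_id t).const_mul c)
    refine h.congr_deriv ?_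
    have h3 : α ^ 2 - q t ^ 2 ≠ 0 := by linarith [hsq t ht]
    have h1' := h1.ne'
    have h2' := h2.ne'
    rw [show α ^ 2 - q t ^ 2 = (α + q t) * (α - q t) by ring]
    field_simp
    ring
  have hslope : ∀ t, 0 ≤ t → 1 / (m - 1) ≤ deriv q t / (α ^ 2 - q t ^ 2) ∧
      deriv q t / (α ^ 2 - q t ^ 2) ≤ 1 / (l - 1) := by
    intro t ht
    have h1 := hlow t
    have h2 := hup t
    have h3 : 0 < α ^ 2 - q t ^ 2 := by linarith [hsq t ht]
    rw [abs_of_pos (hpos t ht), abs_sub_comm, abs_of_pos h3] at h1 h2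
    constructor
    · rw [div_le_div_iff₀ hm0 h3]; linarith
    · rw [div_le_div_iff₀ h3 hl0]; linarith
  intro t ht
  obtain ⟨h1, h2⟩ := hfac t ht
  constructor
  · rw [(le_mul_tanh_iff h1 h2).2]
    have hm : MonotoneOn
        (fun s => Real.log (α + q s) - Real.log (α - q s) - 2 * α * (1 / (m - 1)) * s)
        (Set.Ici 0) := by
      refine monotoneOn_of_deriv_nonneg (convex_Ici 0)
        (fun s hs => (hLd s hs _).continuousAt.continuousWithinAt)
        (fun s hs => (hLd s (interior_subset hs) _).differentiableAt.differentiableWithinAt)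
        fun s hs => ?_
      have hs := interior_subset hs
      rw [(hLd s hs _).deriv, ← mul_sub]
      exact mul_nonneg (by positivity) (sub_nonneg.2 (hslope s hs).1)
    have := hm (Set.mem_Ici.2 le_rfl) ht ht
    simp only [hq0, add_zero, sub_zero, sub_self, mul_zero] at this
    calc 2 * (α * t / (m - 1)) = 2 * α * (1 / (m - 1)) * t := by ring
      _ ≤ _ := by linarith
  · rw [(le_mul_tanh_iff h1 h2).1]
    have hm : AntitoneOn
        (fun s => Real.log (α + q s) - Real.log (α - q s) - 2 * α * (1 / (l - 1)) * s)
        (Set.Ici 0) := by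
      refine antitoneOn_of_deriv_nonpos (convex_Ici 0)
        (fun s hs => (hLd s hs _).continuousAt.continuousWithinAt)
        (fun s hs => (hLd s (interior_subset hs) _).differentiableAt.differentiableWithinAt)
        fun s hs => ?_
      have hs := interior_subset hs
      rw [(hLd s hs _).deriv, ← mul_sub]
      exact mul_nonpos_of_nonneg_of_nonpos (by positivity) (sub_nonpos.2 (hslope s hs).2)
    have := hm (Set.mem_Ici.2 le_rfl) ht ht
    simp only [hq0, add_zero, sub_zero, sub_self, mul_zero] at this
    calc _ ≤ 2 * α * (1 / (l - 1)) * t := by linarith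
      _ = 2 * (α * t / (l - 1)) := by ring
end

section
/- Let (V_α)_{α>0} be a family of C² potentials such that for every α > 0: V_α ≥ 0 on ℝ; V_α(α) = V_α(−α) = 0 and V_α(t) > 0 for t ∈ (−α,α); V_α''(−α) > 0 and V_α''(α) > 0; there exist d₁,d₂,d₃,d₄ > 0 (possibly depending on α) with −d₁ t|t−α| ≤ V_α'(t) ≤ −d₂ t|t−α| for t ∈ [0,α] and −d₃ t|t+α| ≤ V_α'(t) ≤ −d₄ t|t+α| for t ∈ [−α,0]; and there exist ᾱ > 0 and M > 0 such that sup_{|t| ≤ α} |V_α'(t)| ≤ M for all α ∈ (0,ᾱ). Then there exists α₀ > 0 such that for each α ∈ (0,α₀) the problem −(u'/√(1+(u')²))' + V_α'(u) = 0 on ℝ, u(0) = 0, u(t) → ±α as t → ±∞, has a unique twice differentiable solution q with continuous derivative; moreover there exist θ₁,θ₂,θ₃,θ₄,β₁,β₂,β₃,β₄ > 0 such that 0 < α − q(t) ≤ θ₁e^{−θ₂t} and 0 < q'(t) ≤ β₁e^{−β₂t} for all t ≥ 0, and 0 < α + q(t) ≤ θ₃e^{θ₄t} and 0 < q'(t)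 ≤ β₃e^{β₄t} for all t ≤ 0. -/
/-!
Write `p = q'`. Along a solution the energy `V (q) + 1 / √(1 + p²)` is constant, and for a
heteroclinic the constant is `1`, since the increments `q (n + 1) - q n` tend to `0` and `V` vanishes
at the end point `α` (`energy_eq_one`). When `V < 1` this identity says that `|p| = f (q)` for
`f = √(V (2 - V)) / (1 - V)` (`speed`), so the second order problem reduces to `q' = f (q)`.

The bound `M` on `V'` gives `V ≤ 1/2` on `[-α, α]` as soon as `α < ᾱ` and `α < 1 / (2M)`, and integrating the
bounds on `V'` shows that `V` is comparable to `(α - |x|)²` there (`quad_bounds`). Hence `f` is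
comparable to `α - |x|`, so the time map `F x = ∫₀ˣ 1/f` is a bijection from `(-α, α)` onto `ℝ`;
its inverse is the solution, and Grönwall-type estimates give the exponential bounds
(`exists_profile`, `exp_decay`).

For uniqueness, the set of times at which a second solution `u` agrees to first order with `q`
is closed, and it is open because `F (u t) - t` is locally constant near such a time
(`eq_of_energy`). No a priori bound on `u` is needed. The sign of `u' 0` is settled by the limits at
infinity: if `u' 0 < 0`, the argument applies to the time reversal of `u` and yields the wrong limits.
-/

open Real Filter Set MeasureTheory

def IsMCHeteroclinic (V : ℝ → ℝ) (α : ℝ) (q : ℝ → ℝ) : Prop :=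
  Differentiable ℝ q ∧
  (∀ t : ℝ, HasDerivAt (fun s => deriv q s / Real.sqrt (1 + (deriv q s) ^ 2))
    (deriv V (q t)) t) ∧
  Differentiable ℝ (deriv q) ∧ Continuous (deriv q) ∧ q 0 = 0 ∧
  Tendsto q atTop (nhds α) ∧ Tendsto q atBot (nhds (-α))

/-! ### The speed prescribed by the energy and the shape of the potential -/

/-- The upward speed `√(V (2 - V)) / (1 - V)` prescribed at height `x` by the energy identity
`V + 1 / √(1 + p²) = 1`, that is, its nonnegative solution `p`. -/
noncomputable def speed (V : ℝ → ℝ) (x : ℝ) : ℝ := √(V x * (2 - V x)) / (1 - V x)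

/-- Integrating `d₂ x (α - x) ≤ -V' ≤ d₁ x (α - x)` from `x` to `α`. -/
lemma quad_bounds {V V' : ℝ → ℝ} {α d₁ d₂ : ℝ} (hα : 0 < α) (hd₁ : 0 < d₁) (hd₂ : 0 < d₂)
    (hV : ∀ x, HasDerivAt V (V' x) x) (hVα : V α = 0)
    (hb : ∀ t, 0 ≤ t → t ≤ α → -(d₁ * t * |t - α|) ≤ V' t ∧ V' t ≤ -(d₂ * t * |t - α|)) :
    ∀ x, 0 ≤ x → x ≤ α →
      d₂ * α / 6 * (α - x) ^ 2 ≤ V x ∧ V x ≤ d₁ * α / 2 * (α - x) ^ 2 := by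
  -- the antiderivative of `-x (α - x)` that vanishes at `α`
  have hG : ∀ x : ℝ, HasDerivAt (fun x => (α - x) ^ 2 * (α + 2 * x) / 6) (-(x * (α - x))) x := by
    intro x
    have h1 : HasDerivAt (fun x : ℝ => α - x) (-1) x := by
      simpa using (hasDerivAt_id x).const_sub α
    have h2 : HasDerivAt (fun x : ℝ => α + 2 * x) 2 x := by
      simpa using ((hasDerivAt_id x).const_mul 2).const_add α
    refine (((h1.pow 2).mul h2).div_const 6).congr_deriv ?_
    simp only [Pi.pow_apply]
    ring
  have key : ∀ d : ℝ, ∀ x, HasDerivAt (fun x => V x - d * ((α - x) ^ 2 * (α + 2 * x) / 6))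
      (V' x - d * (-(x * (α - x)))) x := fun d x => (hV x).sub ((hG x).const_mul d)
  have habs : ∀ t, t ≤ α → |t - α| = α - t := fun t ht => by
    rw [abs_of_nonpos (by linarith)]; ring
  have hanti : AntitoneOn (fun x => V x - d₂ * ((α - x) ^ 2 * (α + 2 * x) / 6)) (Icc 0 α) := by
    apply antitoneOn_of_deriv_nonpos (convex_Icc 0 α)
    · exact fun x _ => (key d₂ x).continuousAt.continuousWithinAt
    · exact fun x _ => (key d₂ x).differentiableAt.differentiableWithinAt
    · intro x hx
      rw [interior_Icc] at hx
      rw [(key d₂ x).deriv]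
      have := (hb x hx.1.le hx.2.le).2
      rw [habs x hx.2.le] at this
      nlinarith
  have hmono : MonotoneOn (fun x => V x - d₁ * ((α - x) ^ 2 * (α + 2 * x) / 6)) (Icc 0 α) := by
    apply monotoneOn_of_deriv_nonneg (convex_Icc 0 α)
    · exact fun x _ => (key d₁ x).continuousAt.continuousWithinAt
    · exact fun x _ => (key d₁ x).differentiableAt.differentiableWithinAt
    · intro x hx
      rw [interior_Icc] at hx
      rw [(key d₁ x).deriv]
      have := (hb x hx.1.le hx.2.le).1
      rw [habs x hx.2.le] at this
      nlinarith
  intro x hx0 hxα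
  have e1 := hanti ⟨hx0, hxα⟩ ⟨hα.le, le_rfl⟩ hxα
  have e2 := hmono ⟨hx0, hxα⟩ ⟨hα.le, le_rfl⟩ hxα
  simp only [hVα, sub_self] at e1 e2
  have hsq : 0 ≤ (α - x) ^ 2 := sq_nonneg _
  have h1 : (α - x) ^ 2 * (α + 2 * x) ≥ (α - x) ^ 2 * α := by gcongr; linarith
  have h2 : (α - x) ^ 2 * (α + 2 * x) ≤ (α - x) ^ 2 * (3 * α) := by gcongr; linarith
  constructor
  · nlinarith
  · nlinarith

/-! ### The first order equation -/

/-- If `q' ≥ c (α - q)` for `t ≥ 0`, then `(α - q) exp (c t)` is nonincreasing there. -/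
lemma exp_decay {f q : ℝ → ℝ} {α c : ℝ} (hq : ∀ t, HasDerivAt q (f (q t)) t) (h0 : q 0 = 0)
    (hc : ∀ t, 0 ≤ t → c * (α - q t) ≤ f (q t)) :
    ∀ t, 0 ≤ t → α - q t ≤ α * Real.exp (-c * t) := by
  have hd : ∀ t, HasDerivAt (fun t => (α - q t) * Real.exp (c * t))
      (-(f (q t)) * Real.exp (c * t) + (α - q t) * (Real.exp (c * t) * c)) t := by
    intro t
    have h1 : HasDerivAt (fun t : ℝ => c * t) c t := by
      simpa using (hasDerivAt_id t).const_mul c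
    exact ((hq t).const_sub α).mul h1.exp
  have hanti : AntitoneOn (fun t => (α - q t) * Real.exp (c * t)) (Ici 0) := by
    apply antitoneOn_of_deriv_nonpos (convex_Ici 0)
    · exact fun x _ => (hd x).continuousAt.continuousWithinAt
    · exact fun x _ => (hd x).differentiableAt.differentiableWithinAt
    · intro t ht
      rw [interior_Ici] at ht
      rw [(hd t).deriv]
      have := hc t (le_of_lt ht)
      have he := Real.exp_pos (c * t)
      nlinarith
  intro t ht
  have := hanti (mem_Ici.2 le_rfl) (mem_Ici.2 ht) ht
  simp only [h0, mul_zero, Real.exp_zero, sub_zero, mul_one] at this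
  rw [neg_mul, Real.exp_neg, ← div_eq_mul_inv, le_div_iff₀ (Real.exp_pos _)]
  exact this

/-- The time map is unbounded near `α`: as `f x ≤ C (α - x)`, it dominates
`log (α / (α - x)) / C`. -/
lemma timeMap_large {f F : ℝ → ℝ} {α C : ℝ} (hα : 0 < α) (hC : 0 < C)
    (hfpos : ∀ x ∈ Ioo (-α) α, 0 < f x) (hfC : ∀ x, 0 ≤ x → x < α → f x ≤ C * (α - x))
    (hF : ∀ x ∈ Ioo (-α) α, HasDerivAt F (1 / f x) x) (hF0 : F 0 = 0) (t : ℝ) (ht : 0 ≤ t) :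
    ∃ x, 0 ≤ x ∧ x < α ∧ t ≤ F x := by
  have he1 : Real.exp (-C * t) ≤ 1 := Real.exp_le_one_iff.2 (by nlinarith)
  have he0 := Real.exp_pos (-C * t)
  refine ⟨α * (1 - Real.exp (-C * t)), mul_nonneg hα.le (by linarith), by nlinarith, ?_⟩
  have hd : ∀ x, 0 ≤ x → x < α → HasDerivAt (fun x => F x + 1 / C * Real.log (α - x))
      (1 / f x + 1 / C * (-1 / (α - x))) x := by
    intro x h0 h1
    have h2 : HasDerivAt (fun x : ℝ => α - x) (-1) x := by
      simpa using (hasDerivAt_id x).const_sub α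
    exact (hF x ⟨by linarith, h1⟩).add ((h2.log (by linarith)).const_mul (1 / C))
  have hmono : MonotoneOn (fun x => F x + 1 / C * Real.log (α - x)) (Ico 0 α) := by
    apply monotoneOn_of_deriv_nonneg (convex_Ico 0 α)
    · exact fun x hx => (hd x hx.1 hx.2).continuousAt.continuousWithinAt
    · intro x hx
      rw [interior_Ico] at hx
      exact (hd x hx.1.le hx.2).differentiableAt.differentiableWithinAt
    · intro x hx
      rw [interior_Ico] at hx
      rw [(hd x hx.1.le hx.2).deriv]
      have h1 := hfC x hx.1.le hx.2
      have h2 := hfpos x ⟨by linarith [hx.1], hx.2⟩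
      have h3 := one_div_le_one_div_of_le h2 h1
      have h4 : 1 / C * (-1 / (α - x)) = -(1 / (C * (α - x))) := by
        have : α - x ≠ 0 := by linarith [hx.2]
        field_simp
      rw [h4]; linarith
  have := hmono (a := 0) (b := α * (1 - Real.exp (-C * t))) ⟨le_rfl, hα⟩
    ⟨mul_nonneg hα.le (by linarith), by nlinarith⟩ (mul_nonneg hα.le (by linarith))
  simp only [hF0, sub_zero, zero_add] at this
  have h5 : α - α * (1 - Real.exp (-C * t)) = α * Real.exp (-C * t) := by ring
  rw [h5, Real.log_mul hα.ne' he0.ne', Real.log_exp] at this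
  have h6 : 1 / C * (Real.log α + -C * t) = 1 / C * Real.log α - t := by field_simp; ring
  rw [h6] at this
  linarith

/-- The solution `q` of `q' = f (q)`, `q 0 = 0`, as the inverse of the time map
`F x = ∫₀ˣ 1/f`. -/
lemma exists_profile {f : ℝ → ℝ} {α C : ℝ} (hα : 0 < α) (hC : 0 < C)
    (hf : ContinuousOn f (Ioo (-α) α)) (hfpos : ∀ x ∈ Ioo (-α) α, 0 < f x)
    (hfC : ∀ x ∈ Ioo (-α) α, f x ≤ C * (α - |x|)) :
    ∃ F q : ℝ → ℝ, (∀ x ∈ Ioo (-α) α, HasDerivAt F (1 / f x) x) ∧ InjOn F (Ioo (-α) α) ∧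
      (∀ t, q t ∈ Ioo (-α) α) ∧ (∀ t, F (q t) = t) ∧ q 0 = 0 ∧ StrictMono q ∧
      ∀ t, HasDerivAt q (f (q t)) t := by
  have h0mem : (0 : ℝ) ∈ Ioo (-α) α := ⟨by linarith, hα⟩
  have hinv : ContinuousOn (fun x => 1 / f x) (Ioo (-α) α) :=
    continuousOn_const.div hf fun x hx => (hfpos x hx).ne'
  obtain ⟨F, hF, hF0⟩ : ∃ F : ℝ → ℝ,
      (∀ x ∈ Ioo (-α) α, HasDerivAt F (1 / f x) x) ∧ F 0 = 0 := by
    refine ⟨fun x => ∫ s in (0 : ℝ)..x, 1 / f s, fun x hx => ?_, by simp⟩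
    have hsub : uIcc 0 x ⊆ Ioo (-α) α := (ordConnected_Ioo).uIcc_subset h0mem hx
    apply intervalIntegral.integral_hasDerivAt_right
    · exact (hinv.mono hsub).intervalIntegrable
    · exact hinv.stronglyMeasurableAtFilter isOpen_Ioo x hx
    · exact hinv.continuousAt (isOpen_Ioo.mem_nhds hx)
  have hFc : ContinuousOn F (Ioo (-α) α) := fun x hx => (hF x hx).continuousAt.continuousWithinAt
  have hFmono : StrictMonoOn F (Ioo (-α) α) := by
    apply strictMonoOn_of_deriv_pos (convex_Ioo _ _) hFc
    intro x hx
    rw [interior_Ioo] at hx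
    rw [(hF x hx).deriv]
    exact one_div_pos.2 (hfpos x hx)
  have hup : ∀ t, 0 ≤ t → ∃ x, 0 ≤ x ∧ x < α ∧ t ≤ F x :=
    timeMap_large hα hC hfpos
      (fun x h0 h1 => by simpa [abs_of_nonneg h0] using hfC x ⟨by linarith, h1⟩) hF hF0
  have hdown : ∀ t, 0 ≤ t → ∃ x, 0 ≤ x ∧ x < α ∧ t ≤ -F (-x) := by
    have hneg : ∀ x ∈ Ioo (-α) α, -x ∈ Ioo (-α) α := fun x hx =>
      ⟨by linarith [hx.2], by linarith [hx.1]⟩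
    refine timeMap_large (f := fun x => f (-x)) (F := fun x => -F (-x)) hα hC
      (fun x hx => hfpos _ (hneg x hx))
      (fun x h0 h1 => by
        simpa [abs_of_nonneg h0] using hfC (-x) ⟨by linarith, by linarith⟩)
      (fun x hx => ?_) (by simp [hF0])
    have h := ((hF (-x) (hneg x hx)).comp x (hasDerivAt_neg x)).neg
    refine h.congr_deriv ?_
    ring
  have hsurj : ∀ t, ∃ x ∈ Ioo (-α) α, F x = t := by
    intro t
    obtain ⟨b, hb0, hb1, hb⟩ := hup |t| (abs_nonneg t)
    obtain ⟨a, ha0, ha1, ha⟩ := hdown |t| (abs_nonneg t)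
    have hsub : Icc (-a) b ⊆ Ioo (-α) α := fun x hx => ⟨by linarith [hx.1], by linarith [hx.2]⟩
    obtain ⟨x, hx, hxt⟩ := intermediate_value_Icc (by linarith : -a ≤ b) (hFc.mono hsub)
      (show t ∈ Icc (F (-a)) (F b) from
        ⟨by linarith [neg_abs_le t], by linarith [le_abs_self t]⟩)
    exact ⟨x, hsub hx, hxt⟩
  choose q hqm hq using hsurj
  have hqmono : StrictMono q := by
    intro s t hst
    rw [← hFmono.lt_iff_lt (hqm s) (hqm t), hq, hq]
    exact hst
  have hqc : ∀ t, ContinuousAt q t := by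
    intro t
    apply continuousAt_of_monotoneOn_of_image_mem_nhds (s := univ)
      (fun a _ b _ hab => hqmono.monotone hab) univ_mem
    refine mem_of_superset (isOpen_Ioo.mem_nhds (hqm t)) fun x hx => ?_
    exact ⟨F x, trivial, hFmono.injOn (hqm _) hx (hq _)⟩
  refine ⟨F, q, hF, hFmono.injOn, hqm, hq, ?_, hqmono, fun t => ?_⟩
  · exact hFmono.injOn (hqm 0) h0mem (by rw [hq, hF0])
  · have h := HasDerivAt.of_local_left_inverse (hqc t) (hF (q t) (hqm t))
      (one_div_pos.2 (hfpos _ (hqm t))).ne' (Eventually.of_forall hq)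
    simpa using h

/-! ### Energy identity and uniqueness -/

/-- Conservation of energy; the constant is found along intermediate points of the intervals
`[n, n + 1]`, where the derivative equals the increment of `q`. -/
lemma energy_eq_one {V q : ℝ → ℝ} {α : ℝ} (hV : Differentiable ℝ V) (hVα : V α = 0)
    (h : IsMCHeteroclinic V α q) (t : ℝ) : V (q t) + 1 / √(1 + deriv q t ^ 2) = 1 := by
  obtain ⟨hq, hode, hdq, -, -, htop, -⟩ := h
  have hpos : ∀ s, 0 < 1 + deriv q s ^ 2 := fun s => by positivity
  have hE : ∀ s, HasDerivAt (fun s => V (q s) + 1 / √(1 + deriv q s ^ 2)) 0 s := by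
    intro s
    set p := deriv q s with hp
    set p' := deriv (deriv q) s with hp'
    have hr : 0 < √(1 + p ^ 2) := Real.sqrt_pos.2 (hpos s)
    have hr2 : √(1 + p ^ 2) ^ 2 = 1 + p ^ 2 := Real.sq_sqrt (hpos s).le
    have h1 : HasDerivAt (fun s => √(1 + deriv q s ^ 2)) (p * p' / √(1 + p ^ 2)) s := by
      refine (((((hdq s).hasDerivAt).pow 2).const_add 1).sqrt (hpos s).ne').congr_deriv ?_
      simp only [Pi.pow_apply, ← hp, ← hp']
      field_simp
      simp only [Nat.cast_ofNat, Nat.add_one_sub_one, pow_one]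
      ring
    have h2 := ((hdq s).hasDerivAt.div h1 hr.ne').unique (hode s)
    rw [← hp, ← hp'] at h2
    have h3 := (((hV (q s)).hasDerivAt.comp s (hq s).hasDerivAt)).add
      ((hasDerivAt_const s (1 : ℝ)).div h1 hr.ne')
    refine h3.congr_deriv ?_
    rw [← h2, ← hp]
    field_simp
    linear_combination (p' * p) * hr2
  have hconst : ∀ s, V (q s) + 1 / √(1 + deriv q s ^ 2) = V (q t) + 1 / √(1 + deriv q t ^ 2) :=
    fun s => is_const_of_deriv_eq_zero (fun s => (hE s).differentiableAt)
      (fun s => (hE s).deriv) s t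
  have hex : ∀ n : ℕ, ∃ ξ : ℝ, (n : ℝ) ≤ ξ ∧ deriv q ξ = q (n + 1) - q n := by
    intro n
    obtain ⟨ξ, hξ, h⟩ := exists_deriv_eq_slope q (show (n : ℝ) < n + 1 by linarith)
      hq.continuous.continuousOn hq.differentiableOn
    exact ⟨ξ, hξ.1.le, by rw [h]; simp⟩
  choose ξ hξ hξ' using hex
  have hξt : Tendsto ξ atTop atTop := tendsto_atTop_mono hξ tendsto_natCast_atTop_atTop
  have hp0 : Tendsto (fun n => deriv q (ξ n)) atTop (nhds 0) := by
    simp only [hξ']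
    have h1 := htop.comp (tendsto_natCast_atTop_atTop (R := ℝ))
    have h2 := htop.comp (tendsto_atTop_add_const_right atTop (1 : ℝ)
      (tendsto_natCast_atTop_atTop (R := ℝ)))
    simpa using h2.sub h1
  have hlim : Tendsto (fun n => V (q (ξ n)) + 1 / √(1 + deriv q (ξ n) ^ 2)) atTop
      (nhds (V α + 1 / √(1 + 0 ^ 2))) := by
    have hc : Continuous fun x : ℝ => 1 / √(1 + x ^ 2) := by
      refine continuous_const.div (by fun_prop) fun x => ?_
      positivity
    exact ((hV.continuous.tendsto α).comp (htop.comp hξt)).add ((hc.tendsto 0).comp hp0)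
  simp only [hconst] at hlim
  have := tendsto_nhds_unique tendsto_const_nhds hlim
  rw [this, hVα]
  simp

/-- Where `p > 0`, the energy identity at `v = V x` says `p = speed V x`. -/
lemma speed_of_energy {v p : ℝ} (hp : 0 < p) (h : v + 1 / √(1 + p ^ 2) = 1) :
    p = √(v * (2 - v)) / (1 - v) := by
  have hr : 0 < √(1 + p ^ 2) := Real.sqrt_pos.2 (by positivity)
  have hr2 : √(1 + p ^ 2) ^ 2 = 1 + p ^ 2 := Real.sq_sqrt (by positivity)
  have hv : v = 1 - 1 / √(1 + p ^ 2) := by linarith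
  have h1 : v * (2 - v) = (p / √(1 + p ^ 2)) ^ 2 := by
    rw [hv, div_pow, hr2]
    have : (1 - 1 / √(1 + p ^ 2)) * (2 - (1 - 1 / √(1 + p ^ 2))) = 1 - 1 / √(1 + p ^ 2) ^ 2 := by
      field_simp; ring
    rw [this, hr2]
    field_simp; ring
  rw [h1, Real.sqrt_sq (by positivity), hv]
  field_simp
  ring

/-- A curve with the energy of `q` that starts from the same point with positive slope
coincides with `q`. -/
lemma eq_of_energy {V F q u : ℝ → ℝ} {α : ℝ}
    (hfpos : ∀ x ∈ Ioo (-α) α, 0 < speed V x)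
    (hF : ∀ x ∈ Ioo (-α) α, HasDerivAt F (1 / speed V x) x) (hinj : InjOn F (Ioo (-α) α))
    (hqm : ∀ t, q t ∈ Ioo (-α) α) (hFq : ∀ t, F (q t) = t) (hq0 : q 0 = 0)
    (hq : ∀ t, HasDerivAt q (speed V (q t)) t) (hqc : Continuous (deriv q))
    (hu : Differentiable ℝ u) (huc : Continuous (deriv u)) (hu0 : u 0 = 0)
    (hup : 0 < deriv u 0) (hE : ∀ t, V (u t) + 1 / √(1 + deriv u t ^ 2) = 1) : u = q := by
  have hqC : Continuous q := continuous_iff_continuousAt.2 fun t => (hq t).continuousAt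
  have hsp : ∀ t, 0 < deriv u t → deriv u t = speed V (u t) := fun t ht =>
    speed_of_energy ht (hE t)
  have hclopen : IsClopen {t | u t = q t ∧ deriv u t = deriv q t} := by
    constructor
    · exact (isClosed_eq hu.continuous hqC).inter (isClosed_eq huc hqc)
    · rw [Metric.isOpen_iff]
      rintro t₀ ⟨h1, h2⟩
      have hev : ∀ᶠ t in nhds t₀, u t ∈ Ioo (-α) α ∧ 0 < deriv u t := by
        apply Eventually.and
        · exact hu.continuous.continuousAt.eventually_mem
            (isOpen_Ioo.mem_nhds (by rw [h1]; exact hqm t₀))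
        · exact huc.continuousAt.eventually_mem (isOpen_Ioi.mem_nhds (by
            rw [h2, (hq t₀).deriv]; exact hfpos _ (hqm t₀)))
      obtain ⟨ε, hε, hball⟩ := Metric.eventually_nhds_iff_ball.1 hev
      refine ⟨ε, hε, fun t ht => ?_⟩
      have hd : ∀ s ∈ Metric.ball t₀ ε, HasDerivAt (fun s => F (u s) - s) 0 s := by
        intro s hs
        obtain ⟨hs1, hs2⟩ := hball s hs
        have h := ((hF (u s) hs1).comp s (hu s).hasDerivAt).sub (hasDerivAt_id s)
        refine h.congr_deriv ?_
        rw [hsp s hs2, one_div_mul_cancel (hfpos _ hs1).ne', sub_self]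
      have hc : F (u t) - t = F (u t₀) - t₀ :=
        (convex_ball t₀ ε).is_const_of_fderivWithin_eq_zero (𝕜 := ℝ)
          (fun s hs => (hd s hs).differentiableAt.differentiableWithinAt)
          (fun s hs => by
            rw [fderivWithin_of_isOpen Metric.isOpen_ball hs]
            ext
            simp [(hd s hs).deriv])
          ht (Metric.mem_ball_self hε)
      rw [h1, hFq, sub_self] at hc
      have hut : u t = q t := hinj (hball t ht).1 (hqm t) (by rw [hFq]; linarith)
      exact ⟨hut, by rw [hsp t (hball t ht).2, (hq t).deriv, hut]⟩
  have h0 : (0 : ℝ) ∈ {t | u t = q t ∧ deriv u t = deriv q t} := by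
    refine ⟨by rw [hu0, hq0], ?_⟩
    rw [hsp 0 hup, (hq 0).deriv, hu0, hq0]
  have huniv := hclopen.eq_univ ⟨0, h0⟩
  funext t
  exact (huniv.symm ▸ mem_univ t : t ∈ {t | u t = q t ∧ deriv u t = deriv q t}).1

/-! ### Existence and the exponential bounds -/

/-- With `f = speed V`, a solution of `q' = f (q)` solves the second order equation, because
`q' / √(1 + q'²) = √(V (2 - V))` along it. -/
lemma ode_of_speed {V q : ℝ → ℝ} (hV : Differentiable ℝ V)
    (h0 : ∀ t, 0 < V (q t)) (h1 : ∀ t, V (q t) < 1) (hq : ∀ t, HasDerivAt q (speed V (q t)) t) :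
    (∀ t, HasDerivAt (fun s => deriv q s / √(1 + deriv q s ^ 2)) (deriv V (q t)) t) ∧
      Differentiable ℝ (deriv q) := by
  have hpos : ∀ t, 0 < V (q t) * (2 - V (q t)) := fun t => mul_pos (h0 t) (by linarith [h1 t])
  have hdq : deriv q = fun t => √(V (q t) * (2 - V (q t))) / (1 - V (q t)) :=
    funext fun t => (hq t).deriv
  have hv : ∀ t, HasDerivAt (fun t => V (q t)) (deriv V (q t) * speed V (q t)) t := fun t =>
    (hV (q t)).hasDerivAt.comp t (hq t)
  have hs : ∀ t, HasDerivAt (fun t => √(V (q t) * (2 - V (q t)))) (deriv V (q t)) t := by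
    intro t
    have h := ((hv t).mul ((hv t).const_sub 2)).sqrt (hpos t).ne'
    refine h.congr_deriv ?_
    have hr : 0 < √(V (q t) * (2 - V (q t))) := Real.sqrt_pos.2 (hpos t)
    have h1' : 1 - V (q t) ≠ 0 := by linarith [h1 t]
    simp only [speed, Pi.mul_apply]
    field_simp
    ring
  constructor
  · intro t
    convert hs t using 1
    funext s
    have h1' : 0 < 1 - V (q s) := by linarith [h1 s]
    have hsq := Real.sq_sqrt (hpos s).le
    have e : 1 + deriv q s ^ 2 = (1 / (1 - V (q s))) ^ 2 := by
      rw [hdq]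
      simp only [div_pow, hsq]
      field_simp
      ring
    rw [e, Real.sqrt_sq (by positivity), hdq]
    field_simp
  · rw [hdq]
    exact fun t => ((hs t).differentiableAt).div ((hv t).differentiableAt.const_sub 1)
      (by linarith [h1 t])

/-- Used with `r = α - |x|`: a potential comparable to `r²` and at most `1/2` has speed comparable
to `r`. -/
lemma speed_bounds {V : ℝ → ℝ} {x r k K : ℝ} (hr : 0 ≤ r) (hk : 0 < k)
    (h1 : k * r ^ 2 ≤ V x) (h2 : V x ≤ K * r ^ 2) (h3 : V x ≤ 1 / 2) :
    √k * r ≤ speed V x ∧ speed V x ≤ 2 * √(2 * K) * r := by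
  have hv : 0 ≤ V x := le_trans (by positivity) h1
  have hsr : √(r ^ 2) = r := Real.sqrt_sq hr
  have hlo : √k * r ≤ √(V x * (2 - V x)) := by
    rw [show √k * r = √(k * r ^ 2) by rw [Real.sqrt_mul hk.le, hsr]]
    apply Real.sqrt_le_sqrt
    nlinarith
  have hhi : √(V x * (2 - V x)) ≤ √(2 * K) * r := by
    rw [show √(2 * K) * r = √(2 * K * r ^ 2) by rw [Real.sqrt_mul' _ (sq_nonneg r), hsr]]
    apply Real.sqrt_le_sqrt
    nlinarith
  have hs := Real.sqrt_nonneg (V x * (2 - V x))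
  unfold speed
  constructor
  · rw [le_div_iff₀ (by linarith)]
    have : 0 ≤ √k * r := by positivity
    nlinarith
  · rw [div_le_iff₀ (by linarith)]
    nlinarith

theorem statement9 (V : ℝ → ℝ → ℝ)
    (hC2 : ∀ α > (0:ℝ), ContDiff ℝ 2 (V α))
    (hnn : ∀ α > (0:ℝ), ∀ t, 0 ≤ V α t)
    (hzero : ∀ α > (0:ℝ), V α α = 0 ∧ V α (-α) = 0 ∧ ∀ t, -α < t → t < α → 0 < V α t)
    (hconv : ∀ α > (0:ℝ), 0 < deriv (deriv (V α)) (-α) ∧ 0 < deriv (deriv (V α)) α)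
    (hV7 : ∀ α > (0:ℝ), ∃ d₁ d₂ d₃ d₄ : ℝ, 0 < d₁ ∧ 0 < d₂ ∧ 0 < d₃ ∧ 0 < d₄ ∧
      (∀ t, 0 ≤ t → t ≤ α →
        -(d₁ * t * |t - α|) ≤ deriv (V α) t ∧ deriv (V α) t ≤ -(d₂ * t * |t - α|)) ∧
      (∀ t, -α ≤ t → t ≤ 0 →
        -(d₃ * t * |t + α|) ≤ deriv (V α) t ∧ deriv (V α) t ≤ -(d₄ * t * |t + α|)))
    (hV8 : ∃ abar M : ℝ, 0 < abar ∧ 0 < M ∧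
      ∀ α, 0 < α → α < abar → ∀ t, |t| ≤ α → |deriv (V α) t| ≤ M) :
    ∃ α₀ > (0:ℝ), ∀ α, 0 < α → α < α₀ →
      ∃ q : ℝ → ℝ, IsMCHeteroclinic (V α) α q ∧
        (∀ q' : ℝ → ℝ, IsMCHeteroclinic (V α) α q' → q' = q) ∧
        ∃ θ₁ θ₂ θ₃ θ₄ β₁ β₂ β₃ β₄ : ℝ,
          0 < θ₁ ∧ 0 < θ₂ ∧ 0 < θ₃ ∧ 0 < θ₄ ∧ 0 < β₁ ∧ 0 < β₂ ∧ 0 < β₃ ∧ 0 < β₄ ∧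
          (∀ t : ℝ, 0 ≤ t →
            (0 < α - q t ∧ α - q t ≤ θ₁ * Real.exp (-θ₂ * t)) ∧
            (0 < deriv q t ∧ deriv q t ≤ β₁ * Real.exp (-β₂ * t))) ∧
          (∀ t : ℝ, t ≤ 0 →
            (0 < α + q t ∧ α + q t ≤ θ₃ * Real.exp (θ₄ * t)) ∧
            (0 < deriv q t ∧ deriv q t ≤ β₃ * Real.exp (β₄ * t))) := by
  obtain ⟨abar, M, habar, hM, hVM⟩ := hV8
  -- `α < 1 / (2M)` keeps `V α ≤ 1/2` on `[-α, α]`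
  refine ⟨min abar (1 / (2 * M)), lt_min habar (by positivity), fun α hα hαlt => ?_⟩
  have hα1 : α < abar := hαlt.trans_le (min_le_left _ _)
  have hα2 : M * α ≤ 1 / 2 := by
    have h := hαlt.le.trans (min_le_right _ _)
    rw [le_div_iff₀ (by positivity)] at h
    linarith
  replace hVM := hVM α hα hα1
  obtain ⟨hVα, hVnα, hVpos⟩ := hzero α hα
  obtain ⟨d₁, d₂, d₃, d₄, hd₁, hd₂, hd₃, hd₄, hR, hL⟩ := hV7 α hα
  replace hC2 := hC2 α hα
  clear hnn hzero hconv hV7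
  generalize V α = W at *
  have hW : Differentiable ℝ W := hC2.differentiable (by norm_num)
  have hhalf : ∀ x ∈ Ioo (-α) α, W x ≤ 1 / 2 := by
    have hlip : ∀ x ∈ Icc (-α) α, ∀ y ∈ Icc (-α) α, ‖W y - W x‖ ≤ M * ‖y - x‖ :=
      fun x hx y hy => (convex_Icc (-α) α).norm_image_sub_le_of_norm_deriv_le
        (fun z _ => hW z) (fun z hz => hVM z (abs_le.2 hz)) hx hy
    intro x hx
    rcases le_total 0 x with h | h
    · have := hlip α ⟨by linarith, le_rfl⟩ x ⟨hx.1.le, hx.2.le⟩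
      rw [hVα, sub_zero, Real.norm_eq_abs, Real.norm_eq_abs, abs_of_neg (show x - α < 0 by linarith [hx.2])] at this
      nlinarith [le_abs_self (W x)]
    · have := hlip (-α) ⟨le_rfl, by linarith⟩ x ⟨hx.1.le, hx.2.le⟩
      rw [hVnα, sub_zero, Real.norm_eq_abs, Real.norm_eq_abs, abs_of_pos (show 0 < x - -α by linarith [hx.1])] at this
      nlinarith [le_abs_self (W x)]
  have hquadR := quad_bounds hα hd₁ hd₂ (fun x => (hW x).hasDerivAt) hVα hR
  have hquadL := quad_bounds (V := fun x => W (-x)) (V' := fun x => -deriv W (-x)) hα hd₄ hd₃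
    (fun x => (HasDerivAt.scomp x (hW (-x)).hasDerivAt (hasDerivAt_neg x)).congr_deriv (by simp))
    hVnα (fun t h0 h1 => by
      have h := hL (-t) (by linarith) (by linarith)
      have e : |-t + α| = |t - α| := by rw [← abs_neg]; congr 1; ring
      rw [e] at h
      constructor <;> linarith [h.1, h.2])
  set k := min d₂ d₃ * α / 6 with hk
  set K := max d₁ d₄ * α / 2 with hK
  have hkpos : 0 < k := by have := lt_min hd₂ hd₃; positivity
  have hKpos : 0 < K := by have := lt_max_of_lt_left (b := d₁) (c := d₄) hd₁; positivity
  have hquad : ∀ x ∈ Ioo (-α) α, k * (α - |x|) ^ 2 ≤ W x ∧ W x ≤ K * (α - |x|) ^ 2 := by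
    have hk2 : k ≤ d₂ * α / 6 := by rw [hk]; gcongr; exact min_le_left _ _
    have hk3 : k ≤ d₃ * α / 6 := by rw [hk]; gcongr; exact min_le_right _ _
    have hK1 : d₁ * α / 2 ≤ K := by rw [hK]; gcongr; exact le_max_left _ _
    have hK4 : d₄ * α / 2 ≤ K := by rw [hK]; gcongr; exact le_max_right _ _
    intro x hx
    rcases le_total 0 x with h | h
    · rw [abs_of_nonneg h]
      have := hquadR x h hx.2.le
      have hs := sq_nonneg (α - x)
      constructor <;> nlinarith
    · rw [abs_of_nonpos h]
      have := hquadL (-x) (by linarith) (by linarith [hx.1])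
      simp only [neg_neg] at this
      have hs := sq_nonneg (α - -x)
      constructor <;> nlinarith
  have hsb : ∀ x ∈ Ioo (-α) α, √k * (α - |x|) ≤ speed W x ∧
      speed W x ≤ 2 * √(2 * K) * (α - |x|) := fun x hx =>
    speed_bounds (by linarith [abs_lt.2 hx]) hkpos (hquad x hx).1 (hquad x hx).2 (hhalf x hx)
  have hcpos : 0 < √k := Real.sqrt_pos.2 hkpos
  have hCpos : 0 < 2 * √(2 * K) := by positivity
  have hfpos : ∀ x ∈ Ioo (-α) α, 0 < speed W x := fun x hx =>
    lt_of_lt_of_le (mul_pos hcpos (by linarith [abs_lt.2 hx])) (hsb x hx).1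
  have hfc : ContinuousOn (speed W) (Ioo (-α) α) := by
    have hc := hW.continuous
    apply ContinuousOn.div (by fun_prop) (by fun_prop)
    intro x hx
    linarith [hhalf x hx]
  obtain ⟨F, q, hF, hinj, hqm, hFq, hq0, hqmono, hq⟩ :=
    exists_profile hα hCpos hfc hfpos (fun x hx => (hsb x hx).2)
  have hqpos : ∀ t, 0 ≤ t → 0 ≤ q t := fun t ht => hq0 ▸ hqmono.monotone ht
  have hqneg : ∀ t, t ≤ 0 → q t ≤ 0 := fun t ht => hq0 ▸ hqmono.monotone ht
  have hdecR : ∀ t, 0 ≤ t → α - q t ≤ α * Real.exp (-√k * t) :=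
    exp_decay hq hq0 fun t ht => by
      simpa [abs_of_nonneg (hqpos t ht)] using (hsb _ (hqm t)).1
  have hdecL : ∀ t, t ≤ 0 → α + q t ≤ α * Real.exp (√k * t) := by
    have h := exp_decay (f := fun x => speed W (-x)) (q := fun t => -q (-t)) (α := α) (c := √k)
      (fun t => ((HasDerivAt.scomp t (hq (-t)) (hasDerivAt_neg t)).neg).congr_deriv (by simp))
      (by simp [hq0]) (fun t ht => by
        have := (hsb _ (hqm (-t))).1
        rw [abs_of_nonpos (hqneg (-t) (by linarith))] at this
        simpa using this)
    intro t ht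
    simpa using h (-t) (by linarith)
  have hlimR : Tendsto q atTop (nhds α) := by
    have he : Tendsto (fun t => α - α * Real.exp (-√k * t)) atTop (nhds (α - α * 0)) := by
      refine ((Real.tendsto_exp_atBot.comp ?_).const_mul α).const_sub α
      exact tendsto_id.const_mul_atTop_of_neg (by linarith)
    rw [mul_zero, sub_zero] at he
    refine tendsto_of_tendsto_of_tendsto_of_le_of_le' he tendsto_const_nhds ?_ ?_
    · filter_upwards [eventually_ge_atTop 0] with t ht
      linarith [hdecR t ht]
    · exact Eventually.of_forall fun t => (hqm t).2.le
  have hlimL : Tendsto q atBot (nhds (-α)) := by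
    have he : Tendsto (fun t => -α + α * Real.exp (√k * t)) atBot (nhds (-α + α * 0)) := by
      refine ((Real.tendsto_exp_atBot.comp ?_).const_mul α).const_add (-α)
      exact tendsto_id.const_mul_atBot hcpos
    rw [mul_zero, add_zero] at he
    refine tendsto_of_tendsto_of_tendsto_of_le_of_le' tendsto_const_nhds he ?_ ?_
    · exact Eventually.of_forall fun t => (hqm t).1.le
    · filter_upwards [eventually_le_atBot 0] with t ht
      linarith [hdecL t ht]
  obtain ⟨hode, hdq⟩ := ode_of_speed hW (fun t => hVpos _ (hqm t).1 (hqm t).2)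
    (fun t => by linarith [hhalf _ (hqm t)]) hq
  refine ⟨q, ⟨fun t => (hq t).differentiableAt, hode, hdq, hdq.continuous, hq0, hlimR, hlimL⟩,
    fun u hu => ?_, α, √k, α, √k, 2 * √(2 * K) * α, √k, 2 * √(2 * K) * α, √k, hα, hcpos, hα, hcpos,
    mul_pos hCpos hα, hcpos, mul_pos hCpos hα, hcpos, fun t ht => ?_, fun t ht => ?_⟩
  · have hE := energy_eq_one hW hVα hu
    obtain ⟨hud, -, -, huc, hu0, hulim, -⟩ := hu
    have hne : deriv u 0 ≠ 0 := by
      intro h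
      have h1 := hE 0
      rw [hu0, h] at h1
      have := hVpos 0 (by linarith) hα
      norm_num at h1
      linarith
    rcases lt_or_gt_of_ne hne with hneg | hpos
    · exfalso
      have hdv : deriv (fun t => u (-t)) = fun t => -deriv u (-t) :=
        funext fun t => deriv_comp_neg u t
      have hv := eq_of_energy (u := fun t => u (-t)) hfpos hF hinj hqm hFq hq0 hq hdq.continuous
        (by fun_prop) (by rw [hdv]; fun_prop) (by simp [hu0]) (by rw [hdv]; simpa using hneg)
        (fun t => by rw [hdv]; simpa using hE (-t))
      have h1 : Tendsto (fun t => u (-t)) atBot (nhds α) := hulim.comp tendsto_neg_atBot_atTop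
      rw [hv] at h1
      linarith [tendsto_nhds_unique h1 hlimL]
    · exact eq_of_energy hfpos hF hinj hqm hFq hq0 hq hdq.continuous hud huc hu0 hpos hE
  · have h := (hsb _ (hqm t)).2
    rw [abs_of_nonneg (hqpos t ht)] at h
    rw [(hq t).deriv]
    refine ⟨⟨by linarith [(hqm t).2], hdecR t ht⟩, hfpos _ (hqm t), h.trans ?_⟩
    rw [mul_assoc (2 * √(2 * K))]
    exact mul_le_mul_of_nonneg_left (hdecR t ht) hCpos.le
  · have h := (hsb _ (hqm t)).2
    rw [abs_of_nonpos (hqneg t ht), sub_neg_eq_add] at h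
    rw [(hq t).deriv]
    refine ⟨⟨by linarith [(hqm t).1], hdecL t ht⟩, hfpos _ (hqm t), h.trans ?_⟩
    rw [mul_assoc (2 * √(2 * K))]
    exact mul_le_mul_of_nonneg_left (hdecL t ht) hCpos.le
end

section
/- Let L > 0, x_L = √(1+L)/(4(1+L)²), y_L = (4L+3)x_L, and φ_L(t) = 1/√(1+t²) for t ∈ [0,√L], φ_L(t) = x_L(t²−L−1)² + y_L for t ∈ [√L, √(L+1)], φ_L(t) = y_L for t ≥ √(L+1). Assume V ∈ C²(ℝ,ℝ), V ≥ 0, V(α) = V(−α) = 0, V(t) > 0 for t ∈ (−α,α), V''(−α) > 0, V''(α) > 0, and there exist d₁,d₂,d₃,d₄ > 0 with −d₁ t|t−α| ≤ V'(t) ≤ −d₂ t|t−α| for t ∈ [0,α] and −d₃ t|t+α| ≤ V'(t) ≤ −d₄ t|t+α| for t ∈ [−α,0]. Then the problem −(φ_L(|u'|)u')' + V'(u) = 0 on ℝ, u(0) = 0, u(t) → ±α as t → ±∞, has a unique twice differentiable solution q with continuous derivative, and there exist θ₁,θ₂,θ₃,θ₄,β₁,β₂,β₃,β₄ > 0 with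 0 < α − q(t) ≤ θ₁e^{−θ₂t} and 0 < q'(t) ≤ β₁e^{−β₂t} for t ≥ 0, and 0 < α + q(t) ≤ θ₃e^{θ₄t} and 0 < q'(t) ≤ β₃e^{β₄t} for t ≤ 0. Moreover, if V(t) = (t²−α²)², then α·tanh(√2·αt) ≤ q(t) ≤ α·tanh(√2·αt/√(y_L(l_L−1))) for all t ≥ 0, where l_L = (6L+6−L²)/(4L+4) if L ≤ 1 and l_L = (7+4L)/(4L+4) if L > 1. -/
/-!
Write `ψ v = φ_L(|v|) v`. It is `C¹` with derivative `g = gL L`, and `y_L (l_L - 1) ≤ g ≤ 1`, where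
the lower bound is positive. Put `E(v) = ∫₀ᵛ s g(s) ds` (`energy`). Then `E` lies between
`y_L (l_L - 1) v² / 2` and `v² / 2` and is strictly increasing on `(0, ∞)`.

*First integral.* Along a solution `E(q') - V(q)` is constant. If `q → α`, the mean value theorem
on `[n, n + 1]` gives points tending to infinity at which `q' → 0`, so the constant is zero
(`energy_eq`). Since `V(x) = O((x ∓ α)²)` near the wells, `E(q') = V(q)` gives
`|q'| ≤ C |q ∓ α|`, and Grönwall's inequality keeps `q` away from `±α` (`never_hits`). So `q` stays
in `(-α, α)`, `q'` never vanishes, and the problem is equivalent to the scalar equation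
`q' = p(q)` with `p = E⁻¹ ∘ V > 0` (`heteroclinic_first_order`, `exists_speed`).

*Existence and uniqueness.* The scalar equation is solved by inverting the travel time
`T(x) = ∫₀ˣ ds / p(s)`, which maps `(-α, α)` onto `ℝ` because `p(x) ≤ K (α ∓ x)`
(`scalar_exists`).

*Estimates.* The bounds on `V'` integrate to `V(x) ≥ c (α - x)²` on `[0, α]`, and similarly on
`[-α, 0]`, so that `q' ≥ c (α - q)` for `t ≥ 0`, which is exponential decay (`decay`); the decay of
`q'` follows from `q' ≤ K (α - q)`. When `V(t) = (t² - α²)²`, the two bounds on `E` give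
`√2 (α² - q²) ≤ q' ≤ √2 (α² - q²) / √(y_L (l_L - 1))`. Integrating
`log ((α + q) / (α - q))` then gives the two hyperbolic tangents (`tanh_lower`, `tanh_upper`).
-/

open Real Filter Set MeasureTheory

noncomputable def xL (L : ℝ) : ℝ := Real.sqrt (1 + L) / (4 * (1 + L) ^ 2)

noncomputable def yL (L : ℝ) : ℝ := (4 * L + 3) * xL L

noncomputable def phiL (L t : ℝ) : ℝ :=
  if t ≤ Real.sqrt L then 1 / Real.sqrt (1 + t ^ 2)
  else if t ≤ Real.sqrt (L + 1) then xL L * (t ^ 2 - L - 1) ^ 2 + yL L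
  else yL L

noncomputable def lL (L : ℝ) : ℝ :=
  if L ≤ 1 then (6 * L + 6 - L ^ 2) / (4 * L + 4) else (7 + 4 * L) / (4 * L + 4)

def IsPhiLHeteroclinic (L : ℝ) (V : ℝ → ℝ) (α : ℝ) (q : ℝ → ℝ) : Prop :=
  Differentiable ℝ q ∧
  (∀ t : ℝ, HasDerivAt (fun s => phiL L |deriv q s| * deriv q s) (deriv V (q t)) t) ∧
  Differentiable ℝ (deriv q) ∧ Continuous (deriv q) ∧ q 0 = 0 ∧
  Tendsto q atTop (nhds α) ∧ Tendsto q atBot (nhds (-α))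

/-! ### Calculus on the line -/

theorem le_of_deriv_nonneg {F F' : ℝ → ℝ} {a b : ℝ} (hab : a ≤ b)
    (hF : ∀ x ∈ Icc a b, HasDerivAt F (F' x) x) (h : ∀ x ∈ Icc a b, 0 ≤ F' x) : F a ≤ F b := by
  have hm : MonotoneOn F (Icc a b) := by
    apply monotoneOn_of_deriv_nonneg (convex_Icc a b)
    · exact fun x hx => (hF x hx).continuousAt.continuousWithinAt
    · intro x hx
      rw [interior_Icc] at hx
      exact (hF x (Ioo_subset_Icc_self hx)).differentiableAt.differentiableWithinAt
    · intro x hx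
      rw [interior_Icc] at hx
      rw [(hF x (Ioo_subset_Icc_self hx)).deriv]
      exact h x (Ioo_subset_Icc_self hx)
  exact hm (left_mem_Icc.2 hab) (right_mem_Icc.2 hab) hab

/-- A function that near `a` agrees, point by point, with one of two functions having the same value
and the same derivative at `a` has that derivative at `a`. -/
theorem glue {F f h : ℝ → ℝ} {d a : ℝ} (hf : HasDerivAt f d a) (hh : HasDerivAt h d a)
    (hfh : f a = h a) (hF : ∀ᶠ x in nhds a, F x = f x ∨ F x = h x) : HasDerivAt F d a := by
  have ha : F a = f a := by
    rcases hF.self_of_nhds with h1 | h1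
    · exact h1
    · rw [h1, hfh]
  have h1 : HasDerivWithinAt F d {x | F x = f x} a :=
    hf.hasDerivWithinAt.congr (fun x hx => hx) ha
  have h2 : HasDerivWithinAt F d {x | F x = h x} a :=
    hh.hasDerivWithinAt.congr (fun x hx => hx) (ha.trans hfh)
  exact (h1.union h2).hasDerivAt hF

/-- A right inverse `g` on `u` of a strictly increasing function `f` with positive derivative is
differentiable; its continuity is not assumed. -/
theorem inv_deriv {f f' g : ℝ → ℝ} {s u : Set ℝ} (hs : IsOpen s) (hu : IsOpen u)
    (hmono : StrictMonoOn f s) (hf : ∀ x ∈ s, HasDerivAt f (f' x) x) (hf' : ∀ x ∈ s, 0 < f' x)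
    (hgs : ∀ y ∈ u, g y ∈ s) (hfg : ∀ y ∈ u, f (g y) = y) {y : ℝ} (hy : y ∈ u) :
    HasDerivAt g (f' (g y))⁻¹ y := by
  have hgm : StrictMonoOn g u := by
    intro a ha b hb hab
    rw [← hmono.lt_iff_lt (hgs a ha) (hgs b hb), hfg a ha, hfg b hb]
    exact hab
  have hc : ContinuousAt g y := by
    apply hgm.continuousAt_of_image_mem_nhds (hu.mem_nhds hy)
    have h1 : ∀ᶠ x in nhds (g y), f x ∈ u := by
      apply (hf _ (hgs y hy)).continuousAt.eventually_mem
      rw [hfg y hy]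
      exact hu.mem_nhds hy
    filter_upwards [h1, hs.mem_nhds (hgs y hy)] with x hx hxs
    exact ⟨f x, hx, hmono.injOn (hgs _ hx) hxs (hfg _ hx)⟩
  apply HasDerivAt.of_local_left_inverse hc (hf _ (hgs y hy)) (hf' _ (hgs y hy)).ne'
  filter_upwards [hu.mem_nhds hy] with z hz using hfg z hz

/-! ### The scalar equation `q' = p(q)` -/

/-- If `T' ≥ 1 / (K (α - x))` then `T` is bounded below by a function that blows up
logarithmically at `α`. -/
theorem T_ge {T T' : ℝ → ℝ} {K α : ℝ} (hK : 0 < K) (h0 : T 0 = 0)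
    (hT : ∀ x ∈ Ico 0 α, HasDerivAt T (T' x) x) (hT' : ∀ x ∈ Ico 0 α, 1 / (K * (α - x)) ≤ T' x)
    {x : ℝ} (hx : x ∈ Ico 0 α) : (log α - log (α - x)) / K ≤ T x := by
  have := le_of_deriv_nonneg (F := fun y => T y - (log α - log (α - y)) / K)
    (F' := fun y => T' y - (0 - (-1) / (α - y)) / K) hx.1 ?_ ?_
  · simp only [h0, sub_zero, sub_self, zero_div] at this
    linarith
  · intro y hy
    have hy' : y ∈ Ico 0 α := ⟨hy.1, hy.2.trans_lt hx.2⟩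
    have h1 : HasDerivAt (fun y => α - y) (-1) y := by
      simpa using (hasDerivAt_id y).const_sub α
    exact (hT y hy').sub (((hasDerivAt_const y _).sub (h1.log (by linarith [hy'.2]))).div_const K)
  · intro y hy
    have hy' : y ∈ Ico 0 α := ⟨hy.1, hy.2.trans_lt hx.2⟩
    have h1 := hT' y hy'
    have h2 : 0 < α - y := by linarith [hy'.2]
    have : (0 - (-1) / (α - y)) / K = 1 / (K * (α - y)) := by field_simp; ring
    show 0 ≤ T' y - (0 - (-1) / (α - y)) / K
    rw [this]; linarith

/-- The autonomous equation `q' = p(q)`, `q(0) = 0`, with `p > 0` on `(-α, α)` vanishing at least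
linearly at `±α`, has exactly one global solution in `(-α, α)`: the inverse of the travel time
`T(x) = ∫₀ˣ ds / p(s)`. -/
theorem scalar_exists {α K : ℝ} {p : ℝ → ℝ} (hα : 0 < α) (hK : 0 < K)
    (hp : ∀ x ∈ Ioo (-α) α, 0 < p x) (hpc : ContinuousOn p (Ioo (-α) α))
    (hK1 : ∀ x ∈ Ioo (-α) α, p x ≤ K * (α - x)) (hK2 : ∀ x ∈ Ioo (-α) α, p x ≤ K * (α + x)) :
    ∃ q : ℝ → ℝ, (q 0 = 0 ∧ ∀ t, q t ∈ Ioo (-α) α ∧ HasDerivAt q (p (q t)) t) ∧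
      ∀ r : ℝ → ℝ, (r 0 = 0 ∧ ∀ t, r t ∈ Ioo (-α) α ∧ HasDerivAt r (p (r t)) t) → r = q := by
  set T : ℝ → ℝ := fun x => ∫ s in (0:ℝ)..x, (p s)⁻¹ with hTdef
  have hic : ContinuousOn (fun s => (p s)⁻¹) (Ioo (-α) α) := hpc.inv₀ fun x hx => (hp x hx).ne'
  have h0mem : (0:ℝ) ∈ Ioo (-α) α := ⟨by linarith, hα⟩
  have hT : ∀ x ∈ Ioo (-α) α, HasDerivAt T (p x)⁻¹ x := by
    intro x hx
    apply intervalIntegral.integral_hasDerivAt_right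
    · apply ContinuousOn.intervalIntegrable
      apply hic.mono
      exact (ordConnected_Ioo).uIcc_subset h0mem hx
    · exact hic.stronglyMeasurableAtFilter isOpen_Ioo x hx
    · exact hic.continuousAt (isOpen_Ioo.mem_nhds hx)
  have hT0 : T 0 = 0 := by simp [hTdef]
  have hTm : StrictMonoOn T (Ioo (-α) α) := by
    apply strictMonoOn_of_deriv_pos (convex_Ioo _ _)
    · exact fun x hx => (hT x hx).continuousAt.continuousWithinAt
    · intro x hx
      rw [interior_Ioo] at hx
      rw [(hT x hx).deriv]
      exact inv_pos.2 (hp x hx)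
  have hsurj : ∀ t, ∃ x ∈ Ioo (-α) α, T x = t := by
    intro t
    -- `x` is chosen so that the logarithmic lower bound of `T_ge` equals `|t|`; applied to `T` and to
    -- its reflection `y ↦ -T (-y)`, it gives `T (-x) ≤ t ≤ T x`.
    set x := α - α * exp (-(K * |t|)) with hxdef
    have he : 0 < exp (-(K * |t|)) := exp_pos _
    have he1 : exp (-(K * |t|)) ≤ 1 := exp_le_one_iff.2 (by
      have := mul_nonneg hK.le (abs_nonneg t); linarith)
    have hx : x ∈ Ico 0 α := ⟨by rw [hxdef]; nlinarith, by rw [hxdef]; nlinarith⟩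
    have hval : (log α - log (α - x)) / K = |t| := by
      rw [show α - x = α * exp (-(K * |t|)) by rw [hxdef]; ring, log_mul hα.ne' he.ne', log_exp]
      field_simp; ring
    have hsub : ∀ y ∈ Ico 0 α, y ∈ Ioo (-α) α := fun y hy => ⟨by linarith [hy.1], hy.2⟩
    have hsub' : ∀ y ∈ Ico 0 α, -y ∈ Ioo (-α) α := fun y hy =>
      ⟨by linarith [hy.2], by linarith [hy.1]⟩
    have h1 := T_ge (T := T) (T' := fun y => (p y)⁻¹) hK hT0 (fun y hy => hT y (hsub y hy)) (by
      intro y hy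
      rw [one_div]
      exact inv_anti₀ (hp _ (hsub y hy)) (hK1 y (hsub y hy))) hx
    have h2 := T_ge (T := fun y => -T (-y)) (T' := fun y => (p (-y))⁻¹) hK (by simp [hT0]) (by
      intro y hy
      have := ((hT (-y) (hsub' y hy)).comp y (hasDerivAt_neg y)).neg
      rw [mul_neg, mul_one, neg_neg] at this
      exact this) (by
      intro y hy
      rw [one_div]
      apply inv_anti₀ (hp _ (hsub' y hy))
      have := hK2 (-y) (hsub' y hy)
      linarith) hx
    rw [hval] at h1 h2
    have hss : Icc (-x) x ⊆ Ioo (-α) α := fun y hy =>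
      ⟨by linarith [hy.1, hx.2], by linarith [hy.2, hx.2]⟩
    have := intermediate_value_Icc (show -x ≤ x by linarith [hx.1]) (f := T)
      (fun y hy => (hT y (hss hy)).continuousAt.continuousWithinAt)
    obtain ⟨y, hy, hyt⟩ := this (show t ∈ Icc (T (-x)) (T x) from
      ⟨by linarith [neg_abs_le t], by linarith [le_abs_self t]⟩)
    exact ⟨y, hss hy, hyt⟩
  choose q hqm hqT using hsurj
  refine ⟨q, ⟨?_, fun t => ⟨hqm t, ?_⟩⟩, ?_⟩
  · exact hTm.injOn (hqm 0) h0mem (by rw [hqT, hT0])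
  · have := inv_deriv (f := T) (f' := fun x => (p x)⁻¹) (g := q) isOpen_Ioo isOpen_univ hTm hT
      (fun x hx => inv_pos.2 (hp x hx)) (fun y _ => hqm y) (fun y _ => hqT y) (mem_univ t)
    simpa using this
  · rintro r ⟨hr0, hr⟩
    -- along any solution the travel time is the time elapsed, so `T (r t) = t`
    have hd : ∀ t, HasDerivAt (fun t => T (r t) - t) 0 t := by
      intro t
      have h1 := ((hT _ (hr t).1).comp t (hr t).2).sub (hasDerivAt_id t)
      rw [inv_mul_cancel₀ (hp _ (hr t).1).ne', sub_self] at h1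
      exact h1
    funext t
    apply hTm.injOn (hr t).1 (hqm t)
    rw [hqT]
    have := is_const_of_deriv_eq_zero (fun t => (hd t).differentiableAt)
      (fun t => (hd t).deriv) t 0
    simp only [hr0, hT0] at this
    linarith

/-- Since `q' ≥ c (α - q)`, the function `(q - α) e^{ct}` is nondecreasing on `[0, ∞)`. -/
theorem decay {q d : ℝ → ℝ} {α c : ℝ} (hq0 : q 0 = 0)
    (hq : ∀ t, 0 ≤ t → HasDerivAt q (d t) t) (hd : ∀ t, 0 ≤ t → c * (α - q t) ≤ d t)
    {t : ℝ} (ht : 0 ≤ t) : α - q t ≤ α * exp (-c * t) := by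
  have := le_of_deriv_nonneg (F := fun s => (q s - α) * exp (c * s))
    (F' := fun s => d s * exp (c * s) + (q s - α) * (exp (c * s) * (c * 1))) ht ?_ ?_
  · simp only [hq0, zero_sub, mul_zero, exp_zero, mul_one] at this
    rw [neg_mul, exp_neg, ← div_eq_mul_inv, le_div_iff₀ (exp_pos _)]
    linarith
  · intro s hs
    exact ((hq s hs.1).sub_const α).mul (((hasDerivAt_id s).const_mul c).exp)
  · intro s hs
    have h1 := hd s hs.1
    have h2 := exp_pos (c * s)
    show 0 ≤ d s * exp (c * s) + (q s - α) * (exp (c * s) * (c * 1))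
    nlinarith

/-! ### Comparison with hyperbolic tangents -/

theorem tanh_le_iff {α x z : ℝ} :
    α * tanh z ≤ x ↔ (α - x) * exp (2 * z) ≤ α + x := by
  rw [tanh_eq_sinh_div_cosh, sinh_eq, cosh_eq]
  have h1 := exp_pos z
  have h2 := exp_pos (-z)
  have h3 : exp z * exp (-z) = 1 := by rw [← exp_add]; simp
  have h4 : exp (2 * z) = exp z * exp z := by rw [← exp_add]; ring_nf
  have h5 : α * ((exp z - exp (-z)) / 2 / ((exp z + exp (-z)) / 2)) =
    α * (exp z - exp (-z)) / (exp z + exp (-z)) := by field_simp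
  rw [h5, div_le_iff₀ (by positivity), h4]
  constructor
  · intro h
    have := mul_le_mul_of_nonneg_left h h1.le
    linear_combination this + (α + x) * h3
  · intro h
    have := mul_le_mul_of_nonneg_left h h2.le
    linear_combination this - (α - x) * exp z * h3

theorem le_tanh_iff {α x z : ℝ} :
    x ≤ α * tanh z ↔ α + x ≤ (α - x) * exp (2 * z) := by
  have h := tanh_le_iff (α := α) (x := -x) (z := -z)
  rw [tanh_neg] at h
  have h1 := exp_pos (2 * z)
  have h3 : exp (2 * z) * exp (2 * -z) = 1 := by rw [← exp_add]; simp
  constructor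
  · intro h'
    have := mul_le_mul_of_nonneg_left (h.1 (by linarith)) h1.le
    linear_combination this - (α + x) * h3
  · intro h'
    have h2 := exp_pos (2 * -z)
    have := mul_le_mul_of_nonneg_left h' h2.le
    have := h.2 (by linear_combination this + (α - x) * h3)
    linarith

/-- The derivative of `(α + q) / (α - q) * e^{-2αkt}` has the sign of `q' - k (α² - q²)`; the function
is constant exactly for the solutions `α tanh(αk(t - t₀))` of `q' = k (α² - q²)`. -/
theorem ratio_deriv {q d : ℝ → ℝ} {α k t : ℝ} (hq : HasDerivAt q (d t) t) (hlt : q t < α) :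
    HasDerivAt (fun s => (α + q s) / (α - q s) * exp (-(2 * α * k) * s))
      (2 * α * exp (-(2 * α * k) * t) / (α - q t) ^ 2 * (d t - k * ((α - q t) * (α + q t)))) t := by
  have h0 : α - q t ≠ 0 := by linarith
  have := ((hq.const_add α).div (hq.const_sub α) h0).mul
    (((hasDerivAt_id t).const_mul (-(2 * α * k))).exp)
  refine HasDerivAt.congr_deriv this ?_
  simp only [id, Pi.div_apply]
  field_simp
  ring

theorem tanh_lower {q d : ℝ → ℝ} {α k : ℝ} (hα : 0 < α) (hq0 : q 0 = 0)
    (hq : ∀ t, 0 ≤ t → HasDerivAt q (d t) t) (hlt : ∀ t, 0 ≤ t → q t < α)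
    (hd : ∀ t, 0 ≤ t → k * ((α - q t) * (α + q t)) ≤ d t)
    {t : ℝ} (ht : 0 ≤ t) : α * tanh (k * α * t) ≤ q t := by
  have := le_of_deriv_nonneg ht (fun s hs => ratio_deriv (k := k) (hq s hs.1) (hlt s hs.1)) (by
    intro s hs
    exact mul_nonneg (by positivity) (by linarith [hd s hs.1]))
  have h1 : 0 < α - q t := by linarith [hlt t ht]
  rw [tanh_le_iff]
  simp only [hq0, add_zero, sub_zero, mul_zero, exp_zero, div_self hα.ne', mul_one] at this
  rw [neg_mul, exp_neg, ← div_eq_mul_inv, div_div, le_div_iff₀ (by positivity), one_mul] at this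
  rw [show 2 * (k * α * t) = 2 * α * k * t by ring]
  exact this

theorem tanh_upper {q d : ℝ → ℝ} {α k : ℝ} (hα : 0 < α) (hq0 : q 0 = 0)
    (hq : ∀ t, 0 ≤ t → HasDerivAt q (d t) t) (hlt : ∀ t, 0 ≤ t → q t < α)
    (hd : ∀ t, 0 ≤ t → d t ≤ k * ((α - q t) * (α + q t)))
    {t : ℝ} (ht : 0 ≤ t) : q t ≤ α * tanh (k * α * t) := by
  have := le_of_deriv_nonneg ht (fun s hs => (ratio_deriv (k := k) (hq s hs.1) (hlt s hs.1)).neg) (by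
    intro s hs
    rw [← mul_neg]
    exact mul_nonneg (by positivity) (by linarith [hd s hs.1]))
  have h1 : 0 < α - q t := by linarith [hlt t ht]
  rw [le_tanh_iff]
  have this := neg_le_neg_iff.1 this
  simp only [hq0, add_zero, sub_zero, mul_zero, exp_zero, div_self hα.ne', mul_one] at this
  rw [neg_mul, exp_neg, ← div_eq_mul_inv, div_div, div_le_iff₀ (by positivity), one_mul] at this
  rw [show 2 * (k * α * t) = 2 * α * k * t by ring]
  exact this

/-! ### The flux and its derivative -/

/-- The flux `ψ(v) = φ_L(|v|) v`, an odd function on `ℝ`. -/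
noncomputable def psiL (L v : ℝ) : ℝ := phiL L |v| * v

/-- The derivative of the flux `psiL L`. The three regimes are separated by `v²` instead of `|v|`,
so that each branch is a smooth function on all of `ℝ`. -/
noncomputable def gL (L v : ℝ) : ℝ :=
  if v ^ 2 ≤ L then 1 / sqrt (1 + v ^ 2) ^ 3
  else if v ^ 2 ≤ L + 1 then
    xL L * (5 * (v ^ 2 - L - 1) ^ 2 + 4 * (L + 1) * (v ^ 2 - L - 1) + (4 * L + 3))
  else yL L

theorem xL_eq {L : ℝ} (hL : 0 < L) : 4 * xL L = 1 / sqrt (1 + L) ^ 3 := by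
  have h : 0 < sqrt (1 + L) := sqrt_pos.2 (by linarith)
  have h2 : sqrt (1 + L) ^ 2 = 1 + L := sq_sqrt (by linarith)
  rw [xL, show (1 + L) ^ 2 = sqrt (1 + L) ^ 4 by linear_combination (-(1 + L) - sqrt (1 + L) ^ 2) * h2]
  field_simp

theorem xL_pos {L : ℝ} (hL : 0 < L) : 0 < xL L := by
  unfold xL
  have h : 0 < sqrt (1 + L) := sqrt_pos.2 (by linarith)
  positivity

theorem psiL_eq (L v : ℝ) (hL : 0 < L) : psiL L v =
    if v ^ 2 ≤ L then v / sqrt (1 + v ^ 2)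
    else if v ^ 2 ≤ L + 1 then (xL L * (v ^ 2 - L - 1) ^ 2 + yL L) * v
    else yL L * v := by
  unfold psiL phiL
  have h (c : ℝ) (hc : 0 < c) : |v| ≤ sqrt c ↔ v ^ 2 ≤ c := by
    rw [← sq_abs]
    exact Real.le_sqrt (abs_nonneg v) hc.le
  simp only [h L hL, h (L + 1) (by linarith), sq_abs]
  split_ifs <;> ring

theorem hasDerivAt_psi1 (v : ℝ) :
    HasDerivAt (fun v => v / sqrt (1 + v ^ 2)) (1 / sqrt (1 + v ^ 2) ^ 3) v := by
  have h0 : 0 < 1 + v ^ 2 := by positivity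
  have h : 0 < sqrt (1 + v ^ 2) := sqrt_pos.2 h0
  have h2 : sqrt (1 + v ^ 2) ^ 2 = 1 + v ^ 2 := sq_sqrt h0.le
  have h1 : HasDerivAt (fun v : ℝ => 1 + v ^ 2) (2 * v) v := by
    simpa using (hasDerivAt_pow 2 v).const_add 1
  refine HasDerivAt.congr_deriv ((hasDerivAt_id v).div (h1.sqrt h0.ne') h.ne') ?_
  simp only [id]
  field_simp
  rw [h2]; ring

theorem hasDerivAt_psi2 (L v : ℝ) :
    HasDerivAt (fun v => (xL L * (v ^ 2 - L - 1) ^ 2 + yL L) * v)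
      (xL L * (5 * (v ^ 2 - L - 1) ^ 2 + 4 * (L + 1) * (v ^ 2 - L - 1) + (4 * L + 3))) v := by
  have h1 : HasDerivAt (fun v : ℝ => v ^ 2 - L - 1) (2 * v) v := by
    simpa using ((hasDerivAt_pow 2 v).sub_const L).sub_const 1
  refine HasDerivAt.congr_deriv
    ((((h1.pow 2).const_mul (xL L)).add_const (yL L)).mul (hasDerivAt_id v)) ?_
  simp only [yL, Pi.pow_apply]
  ring

/-- The three branches of the flux match in value and derivative at `v² = L` and `v² = L + 1`. -/
theorem hasDerivAt_psi {L : ℝ} (hL : 0 < L) (v : ℝ) : HasDerivAt (psiL L) (gL L v) v := by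
  have hc : ContinuousAt (fun x : ℝ => x ^ 2) v := by fun_prop
  have hs : 0 < sqrt (1 + L) := sqrt_pos.2 (by linarith)
  have h4 := xL_eq hL
  have d1 := hasDerivAt_psi1 v
  have d2 := hasDerivAt_psi2 L v
  have d3 : HasDerivAt (fun v => yL L * v) (yL L) v := by
    simpa using (hasDerivAt_id v).const_mul (yL L)
  rcases lt_trichotomy (v ^ 2) L with h | h | h
  · have hg : gL L v = 1 / sqrt (1 + v ^ 2) ^ 3 := by rw [gL, if_pos h.le]
    rw [hg]
    apply d1.congr_of_eventuallyEq
    filter_upwards [hc.eventually_lt_const h] with x hx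
    rw [psiL_eq L x hL, if_pos hx.le]
  · have hg : gL L v = 1 / sqrt (1 + v ^ 2) ^ 3 := by rw [gL, if_pos h.le]
    have e : 1 / sqrt (1 + v ^ 2) ^ 3 =
        xL L * (5 * (v ^ 2 - L - 1) ^ 2 + 4 * (L + 1) * (v ^ 2 - L - 1) + (4 * L + 3)) := by
      rw [h, ← h4]; ring
    rw [hg]
    refine glue d1 (e ▸ d2) ?_ ?_
    · have h2 : sqrt (1 + L) ^ 2 = 1 + L := sq_sqrt (by linarith)
      have : 1 / sqrt (1 + L) = (4 * L + 4) * xL L := by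
        rw [show (4 * L + 4) * xL L = (1 + L) * (4 * xL L) by ring, h4]
        nth_rewrite 2 [← h2]
        field_simp
      rw [h, div_eq_mul_one_div, this, yL]; ring
    · filter_upwards [hc.eventually_lt_const (show v ^ 2 < L + 1 by linarith)] with x hx
      rw [psiL_eq L x hL, if_pos hx.le]
      split_ifs with h1
      · exact Or.inl rfl
      · exact Or.inr rfl
  · rcases lt_trichotomy (v ^ 2) (L + 1) with h' | h' | h'
    · rw [gL, if_neg h.not_ge, if_pos h'.le]
      apply d2.congr_of_eventuallyEq
      filter_upwards [hc.eventually_lt_const h', hc.eventually_const_lt h] with x hx hx'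
      rw [psiL_eq L x hL, if_neg hx'.not_ge, if_pos hx.le]
    · have hg : gL L v = yL L := by
        rw [gL, if_neg h.not_ge, if_pos h'.le, h', yL]; ring
      rw [hg]
      have e : xL L * (5 * (v ^ 2 - L - 1) ^ 2 + 4 * (L + 1) * (v ^ 2 - L - 1) + (4 * L + 3))
          = yL L := by rw [h', yL]; ring
      refine glue (e ▸ d2) d3 (by rw [h']; ring) ?_
      filter_upwards [hc.eventually_const_lt h] with x hx
      rw [psiL_eq L x hL, if_neg hx.not_ge]
      split_ifs with h1
      · exact Or.inl rfl
      · exact Or.inr rfl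
    · have hg : gL L v = yL L := by
        rw [gL, if_neg h.not_ge, if_neg h'.not_ge]
      rw [hg]
      apply d3.congr_of_eventuallyEq
      filter_upwards [hc.eventually_const_lt h, hc.eventually_const_lt h'] with x hx hx'
      rw [psiL_eq L x hL, if_neg hx.not_ge, if_neg hx'.not_ge]

theorem continuous_gL {L : ℝ} (hL : 0 < L) : Continuous (gL L) := by
  unfold gL
  refine Continuous.if_le ?_ (Continuous.if_le ?_ ?_ ?_ ?_ ?_) ?_ ?_ ?_
  · refine continuous_const.div (by fun_prop) fun v => ?_
    have : 0 < sqrt (1 + v ^ 2) := sqrt_pos.2 (by positivity)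
    positivity
  · fun_prop
  · fun_prop
  · fun_prop
  · fun_prop
  · intro v h; rw [h, yL]; ring
  · fun_prop
  · fun_prop
  · intro v h
    rw [if_pos (by linarith), h, ← xL_eq hL]; ring

theorem gL_le_one {L : ℝ} (hL : 0 < L) (v : ℝ) : gL L v ≤ 1 := by
  have hx := xL_pos hL
  have hs : 1 ≤ sqrt (1 + L) := by rw [Real.one_le_sqrt]; linarith
  have h2 : sqrt (1 + L) ^ 2 = 1 + L := sq_sqrt (by linarith)
  have h4 := xL_eq hL
  have hx1 : 4 * xL L ≤ 1 := by
    rw [h4, div_le_one (by positivity)]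
    exact one_le_pow₀ hs
  have hy1 : (4 * L + 3) * xL L ≤ 1 := by
    have : (4 * L + 3) * xL L = (4 * L + 3) / (4 * sqrt (1 + L) ^ 3) := by
      rw [show (4 * L + 3) * xL L = (4 * L + 3) / 4 * (4 * xL L) by ring, h4]
      field_simp
    rw [this, div_le_one (by positivity), show L = sqrt (1 + L) ^ 2 - 1 by linarith, h2,
      show 1 + (1 + L - 1) = 1 + L by ring]
    nlinarith
  unfold gL
  split_ifs with h1 h3
  · have : 1 ≤ sqrt (1 + v ^ 2) := by rw [Real.one_le_sqrt]; nlinarith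
    rw [div_le_one (by positivity)]
    exact one_le_pow₀ this
  · set s := v ^ 2 - L - 1
    have ha : -1 ≤ s := by simp only [s]; linarith
    have hb : s ≤ 0 := by simp only [s]; linarith
    -- convexity in `s`: the value is at most the chord between the endpoints `s = -1` and `s = 0`
    have : 5 * s ^ 2 + 4 * (L + 1) * s + (4 * L + 3) ≤ (-s) * 4 + (1 + s) * (4 * L + 3) := by
      nlinarith
    have := mul_le_mul_of_nonneg_left this hx.le
    nlinarith
  · exact hy1

/-- Each branch of `gL L` is at least `y_L (l_L - 1)`, with the common factor `x_L` divided out; the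
variable `s` stands for `v² - L - 1`, which runs over `[-1, 0]` on the middle branch. -/
theorem lower_aux {L : ℝ} (hL : 0 < L) : 0 < (4 * L + 3) * (lL L - 1) ∧
    (4 * L + 3) * (lL L - 1) ≤ 4 ∧ (4 * L + 3) * (lL L - 1) ≤ 4 * L + 3 ∧
    ∀ s, -1 ≤ s → s ≤ 0 →
      (4 * L + 3) * (lL L - 1) ≤ 5 * s ^ 2 + 4 * (L + 1) * s + (4 * L + 3) := by
  unfold lL
  have hp : 0 < 4 * L + 4 := by linarith
  split_ifs with h
  · have e : (6 * L + 6 - L ^ 2) / (4 * L + 4) - 1 = (2 * L + 2 - L ^ 2) / (4 * L + 4) := by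
      field_simp; ring
    have h0 : 0 < 2 * L + 2 - L ^ 2 := by nlinarith
    have hk : (4 * L + 3) * ((6 * L + 6 - L ^ 2) / (4 * L + 4) - 1) ≤ 2 * L + 2 - L ^ 2 := by
      rw [e, ← mul_div_assoc, div_le_iff₀ hp]
      nlinarith
    refine ⟨?_, by nlinarith, by nlinarith, fun s h1 h2 => ?_⟩
    · rw [e]; positivity
    · -- `5s² + 4(L + 1)s + 4L + 3 - (2L + 2 - L²) = (2s + L + 1)² + s²`
      nlinarith [sq_nonneg (2 * s + L + 1), sq_nonneg s]
  · push Not at h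
    have e : (7 + 4 * L) / (4 * L + 4) - 1 = 3 / (4 * L + 4) := by
      field_simp; ring
    have hk : (4 * L + 3) * ((7 + 4 * L) / (4 * L + 4) - 1) ≤ 3 := by
      rw [e, ← mul_div_assoc, div_le_iff₀ hp]
      nlinarith
    refine ⟨?_, by nlinarith, by nlinarith, fun s h1 h2 => ?_⟩
    · rw [e]; positivity
    · -- `5s² + 4(L + 1)s + 4L + 3 - 3 = (5s² + 8s + 4) + 4(L - 1)(s + 1)`
      nlinarith [sq_nonneg (5 * s + 4), mul_nonneg (sub_nonneg.2 h.le) (show 0 ≤ s + 1 by linarith)]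

theorem mL_pos {L : ℝ} (hL : 0 < L) : 0 < yL L * (lL L - 1) := by
  have := mul_pos (lower_aux hL).1 (xL_pos hL)
  unfold yL; linarith

theorem mL_le_gL {L : ℝ} (hL : 0 < L) (v : ℝ) : yL L * (lL L - 1) ≤ gL L v := by
  have hx := xL_pos hL
  obtain ⟨_, k1, k2, k3⟩ := lower_aux hL
  rw [show yL L * (lL L - 1) = xL L * ((4 * L + 3) * (lL L - 1)) by unfold yL; ring]
  unfold gL
  split_ifs with h1 h3
  · calc _ ≤ xL L * 4 := mul_le_mul_of_nonneg_left k1 hx.le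
      _ = 1 / sqrt (1 + L) ^ 3 := by rw [← xL_eq hL]; ring
      _ ≤ _ := by
        have : 0 < sqrt (1 + v ^ 2) := sqrt_pos.2 (by positivity)
        gcongr
  · exact mul_le_mul_of_nonneg_left (k3 _ (by linarith) (by linarith)) hx.le
  · rw [yL, mul_comm _ (xL L)]
    exact mul_le_mul_of_nonneg_left k2 hx.le

/-! ### The energy and the first integral -/

/-- `F' (v) = v k(v)` with `k ≥ 0` makes `0` a global minimum of `F`. -/
theorem nonneg_of_hasDerivAt_mul {F k : ℝ → ℝ} (h0 : F 0 = 0)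
    (hF : ∀ v, HasDerivAt F (v * k v) v) (hk : ∀ v, 0 ≤ k v) (v : ℝ) : 0 ≤ F v := by
  rcases le_total 0 v with hv | hv
  · rw [← h0]
    exact le_of_deriv_nonneg hv (fun x _ => hF x) fun x hx => mul_nonneg hx.1 (hk x)
  · have := le_of_deriv_nonneg hv (fun x _ => (hF x).neg) fun x hx => by
      have := mul_nonneg (neg_nonneg.2 hx.2) (hk x)
      linarith
    simp only [Pi.neg_apply, h0] at this
    linarith

/-- The kinetic energy `∫₀ᵛ s g(s) ds` of a flux with derivative `g`, i.e. the Legendre-type quantity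
`ψ(v) v - ∫₀ᵛ ψ`. -/
noncomputable def energy (g : ℝ → ℝ) (v : ℝ) : ℝ := ∫ s in (0:ℝ)..v, s * g s

theorem energy_zero (g : ℝ → ℝ) : energy g 0 = 0 := by simp [energy]

theorem hasDerivAt_energy {g : ℝ → ℝ} (hg : Continuous g) (v : ℝ) :
    HasDerivAt (energy g) (v * g v) v := by
  have hc : Continuous fun s => s * g s := by fun_prop
  exact hc.integral_hasStrictDerivAt 0 v |>.hasDerivAt

theorem energy_lower {g : ℝ → ℝ} (hg : Continuous g) {m : ℝ} (hm : ∀ v, m ≤ g v) (v : ℝ) :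
    m / 2 * v ^ 2 ≤ energy g v := by
  have := nonneg_of_hasDerivAt_mul (F := fun v => energy g v - m / 2 * v ^ 2)
    (k := fun v => g v - m) (by simp [energy_zero]) (fun v => by
      refine ((hasDerivAt_energy hg v).sub ((hasDerivAt_pow 2 v).const_mul (m / 2))).congr_deriv ?_
      norm_num; ring) (fun v => sub_nonneg.2 (hm v)) v
  linarith

theorem energy_upper {g : ℝ → ℝ} (hg : Continuous g) {M : ℝ} (hM : ∀ v, g v ≤ M) (v : ℝ) :
    energy g v ≤ M / 2 * v ^ 2 := by
  have := nonneg_of_hasDerivAt_mul (F := fun v => M / 2 * v ^ 2 - energy g v)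
    (k := fun v => M - g v) (by simp [energy_zero]) (fun v => by
      refine (((hasDerivAt_pow 2 v).const_mul (M / 2)).sub (hasDerivAt_energy hg v)).congr_deriv ?_
      norm_num; ring) (fun v => sub_nonneg.2 (hM v)) v
  linarith

theorem energy_strictMonoOn {g : ℝ → ℝ} (hg : Continuous g) {m : ℝ} (hm0 : 0 < m)
    (hm : ∀ v, m ≤ g v) : StrictMonoOn (energy g) (Ioi 0) := by
  apply strictMonoOn_of_deriv_pos (convex_Ioi 0)
  · exact fun x _ => (hasDerivAt_energy hg x).continuousAt.continuousWithinAt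
  · intro x hx
    rw [interior_Ioi] at hx
    rw [(hasDerivAt_energy hg x).deriv]
    exact mul_pos hx (hm0.trans_le (hm x))

/-- The inverse of the energy on `(0, ∞)`, with its derivative; its values outside `(0, ∞)` are
irrelevant. -/
theorem exists_energy_inv {g : ℝ → ℝ} (hg : Continuous g) {m : ℝ} (hm0 : 0 < m)
    (hm : ∀ v, m ≤ g v) : ∃ h : ℝ → ℝ, ∀ y, 0 < y → 0 < h y ∧ energy g (h y) = y ∧
      HasDerivAt h (h y * g (h y))⁻¹ y := by
  have hex : ∀ y : ℝ, ∃ v, 0 < y → 0 < v ∧ energy g v = y := by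
    intro y
    by_cases hy : 0 < y
    · set R := sqrt (2 * y / m)
      have hR : R ^ 2 = 2 * y / m := sq_sqrt (by positivity)
      have h1 := energy_lower hg hm R
      have h2 : m / 2 * R ^ 2 = y := by rw [hR]; field_simp
      obtain ⟨v, hv, hvy⟩ := intermediate_value_Icc (sqrt_nonneg _ : 0 ≤ R)
        (fun x _ => (hasDerivAt_energy hg x).continuousAt.continuousWithinAt)
        (show y ∈ Icc (energy g 0) (energy g R) from ⟨by rw [energy_zero]; exact hy.le, by linarith⟩)
      refine ⟨v, fun _ => ⟨lt_of_le_of_ne hv.1 ?_, hvy⟩⟩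
      rintro rfl
      rw [energy_zero] at hvy
      exact hy.ne hvy
    · exact ⟨0, fun h => absurd h hy⟩
  choose h hh using hex
  refine ⟨h, fun y hy => ⟨(hh y hy).1, (hh y hy).2, ?_⟩⟩
  exact inv_deriv (f' := fun v => v * g v) isOpen_Ioi isOpen_Ioi (energy_strictMonoOn hg hm0 hm)
    (fun x _ => hasDerivAt_energy hg x) (fun x hx => mul_pos hx (hm0.trans_le (hm x)))
    (fun y hy => (hh y hy).1) (fun y hy => (hh y hy).2) hy

/-- Conservation of energy along a solution converging to a zero of `V`. -/
theorem energy_eq {ψ g V q : ℝ → ℝ} {a : ℝ} (hψ : ∀ v, HasDerivAt ψ (g v) v) (hg : Continuous g)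
    (hV : Differentiable ℝ V) (hq1 : Differentiable ℝ q)
    (hq2 : ∀ t, HasDerivAt (fun s => ψ (deriv q s)) (deriv V (q t)) t)
    (hq3 : Differentiable ℝ (deriv q)) (hlim : Tendsto q atTop (nhds a)) (hVa : V a = 0) (t : ℝ) :
    energy g (deriv q t) = V (q t) := by
  set D : ℝ → ℝ := fun t => energy g (deriv q t) - V (q t) with hD
  have hd : ∀ t, HasDerivAt D 0 t := by
    intro t
    have h1 := (hψ (deriv q t)).comp t (hq3 t).hasDerivAt
    have h2 : deriv V (q t) = g (deriv q t) * deriv (deriv q) t := (hq2 t).unique h1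
    have h3 := ((hasDerivAt_energy hg (deriv q t)).comp t (hq3 t).hasDerivAt).sub
      ((hV (q t)).hasDerivAt.comp t (hq1 t).hasDerivAt)
    refine HasDerivAt.congr_deriv h3 ?_
    rw [h2]; ring
  have hconst : ∀ s, D s = D t := fun s =>
    is_const_of_deriv_eq_zero (fun t => (hd t).differentiableAt) (fun t => (hd t).deriv) s t
  -- mean value points `ξ n ∈ (n, n + 1)`, at which `q'` tends to `0`
  have hξ : ∀ n : ℕ, ∃ x ∈ Ioo (n : ℝ) (n + 1), deriv q x = q (n + 1) - q n := by
    intro n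
    obtain ⟨x, hx, h⟩ := exists_deriv_eq_slope q (show (n : ℝ) < n + 1 by linarith)
      hq1.continuous.continuousOn hq1.differentiableOn
    exact ⟨x, hx, by rw [h]; ring⟩
  choose ξ hξm hξd using hξ
  have hξlim : Tendsto ξ atTop atTop :=
    tendsto_atTop_mono (fun n => (hξm n).1.le) tendsto_natCast_atTop_atTop
  have hdlim : Tendsto (fun n => deriv q (ξ n)) atTop (nhds 0) := by
    simp only [hξd]
    have h1 : Tendsto (fun n : ℕ => q n) atTop (nhds a) :=
      hlim.comp tendsto_natCast_atTop_atTop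
    have h2 : Tendsto (fun n : ℕ => q (n + 1)) atTop (nhds a) :=
      hlim.comp (tendsto_atTop_add_const_right _ _ tendsto_natCast_atTop_atTop)
    simpa using h2.sub h1
  have hDlim : Tendsto (fun n => D (ξ n)) atTop (nhds 0) := by
    have h1 := ((hasDerivAt_energy hg 0).continuousAt.tendsto.comp hdlim)
    have h2 := (hV a).continuousAt.tendsto.comp (hlim.comp hξlim)
    have := h1.sub h2
    rw [energy_zero, hVa, sub_zero] at this
    exact this
  simp only [hconst] at hDlim
  have := tendsto_nhds_unique hDlim tendsto_const_nhds
  simp only [hD] at this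
  linarith

/-! ### Behaviour near the wells -/

/-- The quadratic upper bound at a zero of a nonnegative `C²` function, on a compact interval. -/
theorem V_le {V : ℝ → ℝ} (hC2 : ContDiff ℝ 2 V) (hnn : ∀ t, 0 ≤ V t) {a : ℝ} (hVa : V a = 0)
    {R : ℝ} (haR : |a| ≤ R) : ∃ K, 0 < K ∧ ∀ x, |x| ≤ R → V x ≤ K * (x - a) ^ 2 := by
  have hC : ContDiff ℝ (1 + 1) V := by rwa [one_add_one_eq_two]
  have hC1 : ContDiff ℝ 1 (deriv V) := (contDiff_succ_iff_deriv.1 hC).2.2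
  have hcc : Continuous (deriv (deriv V)) := hC1.continuous_deriv le_rfl
  have hV : Differentiable ℝ V := hC2.differentiable (by norm_num)
  have hV' : Differentiable ℝ (deriv V) := hC1.differentiable (by norm_num)
  obtain ⟨C, hCb⟩ := (isCompact_Icc (a := -R) (b := R)).exists_bound_of_continuousOn hcc.continuousOn
  have hda : deriv V a = 0 :=
    IsLocalMin.deriv_eq_zero (Filter.Eventually.of_forall fun x => by rw [hVa]; exact hnn x)
  refine ⟨|C| + 1, by positivity, fun x hx => ?_⟩
  have haI : a ∈ Icc (-R) R := abs_le.1 haR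
  have hxI : x ∈ Icc (-R) R := abs_le.1 hx
  -- since `V' a = 0`, the mean value inequality for `V'` bounds `V'` between `a` and `x`
  have h1 : ∀ y ∈ uIcc a x, ‖deriv V y‖ ≤ (|C| + 1) * |x - a| := by
    intro y hy
    have := Convex.norm_image_sub_le_of_norm_deriv_le (f := deriv V) (fun z _ => hV' z)
      (fun z hz => (hCb z hz).trans (show C ≤ |C| + 1 by linarith [le_abs_self C]))
      (convex_Icc (-R) R) haI (ordConnected_Icc.uIcc_subset haI hxI hy)
    rw [hda, sub_zero] at this
    refine this.trans (mul_le_mul_of_nonneg_left ?_ (by positivity))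
    exact abs_sub_left_of_mem_uIcc hy
  have h2 := Convex.norm_image_sub_le_of_norm_deriv_le (f := V) (fun z _ => hV z) h1
    (convex_uIcc a x) left_mem_uIcc right_mem_uIcc
  rw [hVa, sub_zero, Real.norm_eq_abs, Real.norm_eq_abs, abs_of_nonneg (hnn x), mul_assoc,
    ← pow_two, sq_abs] at h2
  exact h2

/-- The constant `2K/m + 1` stands in for `√(2K/m)`, which it exceeds. -/
theorem speed_le {m K v w : ℝ} (hm : 0 < m) (hK : 0 < K) (h : m / 2 * v ^ 2 ≤ K * w ^ 2) :
    |v| ≤ (2 * K / m + 1) * |w| := by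
  apply abs_le_of_sq_le_sq _ (by positivity)
  have h0 : 0 < 2 * K / m := by positivity
  have h1 : v ^ 2 ≤ 2 * K / m * w ^ 2 := by
    rw [div_mul_eq_mul_div, le_div_iff₀ hm]
    linarith
  rw [mul_pow, sq_abs]
  refine h1.trans (mul_le_mul_of_nonneg_right ?_ (sq_nonneg w))
  nlinarith

/-- A zero-energy motion cannot reach a zero `a` of `V` in finite time unless it starts there. -/
theorem never_hits {g V q : ℝ → ℝ} {a m : ℝ} (hg : Continuous g) (hm0 : 0 < m)
    (hm : ∀ v, m ≤ g v) (hC2 : ContDiff ℝ 2 V) (hnn : ∀ t, 0 ≤ V t) (hVa : V a = 0)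
    (hq : Differentiable ℝ q) (hE : ∀ t, energy g (deriv q t) = V (q t)) (h0 : q 0 ≠ a) (t : ℝ) :
    q t ≠ a := by
  intro ht
  have hqc := hq.continuous
  -- The path from time `t` back to time `0` is parametrised by `s ↦ t - t * s` on `[0, 1]`, which
  -- treats both signs of `t` at once.
  obtain ⟨R, hR⟩ := (isCompact_Icc (a := (0:ℝ)) (b := 1)).exists_bound_of_continuousOn
    (f := fun s => q (t - t * s)) (by fun_prop)
  obtain ⟨K, hK, hVK⟩ := V_le hC2 hnn hVa (le_max_right R |a|)
  have hd : ∀ s, HasDerivAt (fun s => q (t - t * s) - a) (deriv q (t - t * s) * (-t)) s := by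
    intro s
    have h1 : HasDerivAt (fun s : ℝ => t - t * s) (-t) s := by
      simpa using ((hasDerivAt_id s).const_mul t).const_sub t
    exact ((hq _).hasDerivAt.comp s h1).sub_const a
  have := eq_zero_of_abs_deriv_le_mul_abs_self_of_eq_zero_right (a := 0) (b := 1)
    (f := fun s => q (t - t * s) - a) (f' := fun s => deriv q (t - t * s) * (-t))
    (K := (2 * K / m + 1) * |t|)
    (fun s _ => (hd s).continuousAt.continuousWithinAt) (fun s _ => (hd s).hasDerivWithinAt)
    (by simp [ht]) (by
      intro s hs
      have h1 := hVK _ ((hR s ⟨hs.1, hs.2.le⟩).trans (le_max_left R |a|))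
      have h2 := speed_le hm0 hK ((energy_lower hg hm (deriv q (t - t * s))).trans
        ((hE _).le.trans h1))
      rw [norm_mul, norm_neg, Real.norm_eq_abs, Real.norm_eq_abs, Real.norm_eq_abs]
      have := mul_le_mul_of_nonneg_right h2 (abs_nonneg t)
      linarith) 1 (by simp)
  simp only [mul_one, sub_self] at this
  exact h0 (by linarith)

/-- Integration of `V' (t) ≤ -d t (α - t)` from `x` to `α`: with `w = α - x ≤ α` it gives
`V x ≥ d (α w² / 2 - w³ / 3) ≥ d α w² / 6`. -/
theorem V_ge {V : ℝ → ℝ} {α d : ℝ} (hd : 0 < d) (hV : Differentiable ℝ V) (hVα : V α = 0)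
    (h : ∀ t, 0 ≤ t → t ≤ α → deriv V t ≤ -(d * t * (α - t))) {x : ℝ} (hx : 0 ≤ x) (hxα : x ≤ α) :
    d * α / 6 * (α - x) ^ 2 ≤ V x := by
  have := le_of_deriv_nonneg (F := fun y => d * (α * (α - y) ^ 2 / 2 - (α - y) ^ 3 / 3) - V y)
    (F' := fun y => -(d * y * (α - y)) - deriv V y) hxα (by
      intro y _
      have h1 : HasDerivAt (fun y : ℝ => α - y) (-1) y := by
        simpa using (hasDerivAt_id y).const_sub α
      refine HasDerivAt.congr_deriv (((((h1.pow 2).const_mul α).div_const 2).sub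
        ((h1.pow 3).div_const 3)).const_mul d |>.sub (hV y).hasDerivAt) ?_
      norm_num
      ring) (by
      intro y hy
      have := h y (hx.trans hy.1) hy.2
      show 0 ≤ -(d * y * (α - y)) - deriv V y
      linarith)
  simp only [sub_self, hVα] at this
  have h3 : (α - x) ^ 2 * (α - x) ≤ (α - x) ^ 2 * α :=
    mul_le_mul_of_nonneg_left (by linarith) (sq_nonneg _)
  have h4 := mul_le_mul_of_nonneg_left h3 hd.le
  nlinarith

/-! ### Reduction to the scalar equation -/

/-- A zero-energy motion from `0` to the well `α` stays strictly between the wells and is strictly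
increasing. -/
theorem heteroclinic_first_order {g V q : ℝ → ℝ} {α m : ℝ} (hα : 0 < α) (hg : Continuous g)
    (hm0 : 0 < m) (hm : ∀ v, m ≤ g v) (hC2 : ContDiff ℝ 2 V) (hnn : ∀ t, 0 ≤ V t)
    (hzero : V α = 0 ∧ V (-α) = 0 ∧ ∀ t, -α < t → t < α → 0 < V t)
    (hq : Differentiable ℝ q) (hqc : Continuous (deriv q)) (h0 : q 0 = 0)
    (hlim : Tendsto q atTop (nhds α)) (hE : ∀ t, energy g (deriv q t) = V (q t)) (t : ℝ) :
    q t ∈ Ioo (-α) α ∧ 0 < deriv q t := by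
  have hne1 := never_hits hg hm0 hm hC2 hnn hzero.1 hq hE (by rw [h0]; exact hα.ne)
  have hne2 := never_hits hg hm0 hm hC2 hnn hzero.2.1 hq hE
    (by rw [h0]; exact (neg_neg_of_pos hα).ne')
  have hI : ∀ t, q t ∈ Ioo (-α) α := by
    intro t
    constructor
    · by_contra! h
      obtain ⟨s, hs⟩ := mem_range_of_exists_le_of_exists_ge hq.continuous ⟨t, h⟩
        ⟨0, by rw [h0]; linarith⟩
      exact hne2 s hs
    · by_contra! h
      obtain ⟨s, hs⟩ := mem_range_of_exists_le_of_exists_ge hq.continuous ⟨0, by rw [h0]; exact hα.le⟩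
        ⟨t, h⟩
      exact hne1 s hs
  have hd : ∀ t, deriv q t ≠ 0 := by
    intro t ht
    have h1 := hE t
    rw [ht, energy_zero] at h1
    exact (hzero.2.2 _ (hI t).1 (hI t).2).ne h1
  refine ⟨hI t, ?_⟩
  by_contra! h
  have hneg : ∀ s, deriv q s < 0 := by
    intro s
    by_contra! hs
    obtain ⟨r, hr⟩ := mem_range_of_exists_le_of_exists_ge hqc ⟨t, h⟩ ⟨s, hs⟩
    exact hd r hr
  have hanti := (strictAnti_of_deriv_neg hneg).antitone
  have : α ≤ 0 := le_of_tendsto hlim (by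
    filter_upwards [eventually_ge_atTop 0] with s hs
    rw [← h0]
    exact hanti hs)
  linarith

/-- The speed `p = E⁻¹ ∘ V` of a zero-energy motion at position `x ∈ (-α, α)`, with `E = energy g`:
it is differentiable there and vanishes at least linearly at the wells. -/
theorem exists_speed {g V : ℝ → ℝ} {α m : ℝ} (hα : 0 < α) (hg : Continuous g)
    (hm0 : 0 < m) (hm : ∀ v, m ≤ g v) (hC2 : ContDiff ℝ 2 V) (hnn : ∀ t, 0 ≤ V t)
    (hzero : V α = 0 ∧ V (-α) = 0 ∧ ∀ t, -α < t → t < α → 0 < V t) :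
    ∃ (p : ℝ → ℝ) (K : ℝ), 0 < K ∧ ∀ x ∈ Ioo (-α) α,
      0 < p x ∧ energy g (p x) = V x ∧
      HasDerivAt p ((p x * g (p x))⁻¹ * deriv V x) x ∧ p x ≤ K * (α - x) ∧ p x ≤ K * (α + x) := by
  obtain ⟨h, hh⟩ := exists_energy_inv hg hm0 hm
  have hV : Differentiable ℝ V := hC2.differentiable (by norm_num)
  obtain ⟨K₁, hK₁, hVK₁⟩ := V_le hC2 hnn hzero.1 (R := α) (abs_of_pos hα).le
  obtain ⟨K₂, hK₂, hVK₂⟩ := V_le hC2 hnn hzero.2.1 (R := α) (by rw [abs_neg, abs_of_pos hα])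
  refine ⟨fun x => h (V x), (2 * K₁ / m + 1) + (2 * K₂ / m + 1), by positivity, fun x hx => ?_⟩
  have hVx := hzero.2.2 x hx.1 hx.2
  obtain ⟨h1, h2, h3⟩ := hh _ hVx
  have hxα : |x| ≤ α := abs_le.2 ⟨hx.1.le, hx.2.le⟩
  have hlow := energy_lower hg hm (h (V x))
  rw [h2] at hlow
  have s1 := speed_le hm0 hK₁ (hlow.trans (hVK₁ x hxα))
  have s2 := speed_le hm0 hK₂ (hlow.trans (hVK₂ x hxα))
  have p1 : 0 < 2 * K₁ / m + 1 := by positivity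
  have p2 : 0 < 2 * K₂ / m + 1 := by positivity
  rw [abs_of_pos h1, abs_of_neg (by linarith [hx.2])] at s1
  rw [abs_of_pos h1, abs_of_pos (by linarith [hx.1])] at s2
  refine ⟨h1, h2, h3.comp x (hV x).hasDerivAt, ?_, ?_⟩
  · have := mul_pos p2 (show 0 < α - x by linarith [hx.2])
    linarith
  · have := mul_pos p1 (show 0 < α + x by linarith [hx.1])
    linarith

theorem speed_ge {v w c : ℝ} (hc : 0 < c) (hv : 0 < v) (h : c * w ^ 2 ≤ 1 / 2 * v ^ 2) :
    sqrt (2 * c) * w ≤ v := by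
  refine (le_abs_self _).trans (abs_le_of_sq_le_sq ?_ hv.le)
  rw [mul_pow, sq_sqrt (by positivity)]
  linarith

/-- Every solution of the heteroclinic problem solves the scalar equation `q' = p(q)`. -/
theorem isPhiLHeteroclinic_first_order {L α : ℝ} {V p q : ℝ → ℝ} (hL : 0 < L) (hα : 0 < α)
    (hC2 : ContDiff ℝ 2 V) (hnn : ∀ t, 0 ≤ V t)
    (hzero : V α = 0 ∧ V (-α) = 0 ∧ ∀ t, -α < t → t < α → 0 < V t)
    (hp : ∀ x ∈ Ioo (-α) α, 0 < p x ∧ energy (gL L) (p x) = V x)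
    (hq : IsPhiLHeteroclinic L V α q) :
    q 0 = 0 ∧ ∀ t, q t ∈ Ioo (-α) α ∧ HasDerivAt q (p (q t)) t := by
  obtain ⟨h1, h2, h3, h4, h5, h6, -⟩ := hq
  have hg := continuous_gL hL
  have hE := energy_eq (hasDerivAt_psi hL) hg (hC2.differentiable (by norm_num)) h1 h2 h3 h6
    hzero.1
  refine ⟨h5, fun t => ?_⟩
  obtain ⟨hI, hpos⟩ := heteroclinic_first_order hα hg (mL_pos hL) (mL_le_gL hL) hC2 hnn hzero h1
    h4 h5 h6 hE t
  refine ⟨hI, ?_⟩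
  have : deriv q t = p (q t) :=
    (energy_strictMonoOn hg (mL_pos hL) (mL_le_gL hL)).injOn hpos (hp _ hI).1
      ((hE t).trans (hp _ hI).2.symm)
  rw [← this]
  exact (h1 t).hasDerivAt

/-! ### The heteroclinic solution -/

theorem tendsto_of_decay {q : ℝ → ℝ} {α θ c : ℝ} (hc : 0 < c) (hlt : ∀ t, q t < α)
    (h : ∀ t, 0 ≤ t → α - q t ≤ θ * exp (-c * t)) : Tendsto q atTop (nhds α) := by
  have h1 : Tendsto (fun t => α - θ * exp (-c * t)) atTop (nhds (α - θ * 0)) := by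
    refine tendsto_const_nhds.sub (tendsto_const_nhds.mul ?_)
    exact tendsto_exp_atBot.comp (tendsto_id.const_mul_atTop_of_neg (neg_neg_of_pos hc))
  rw [mul_zero, sub_zero] at h1
  refine tendsto_of_tendsto_of_tendsto_of_le_of_le' h1 tendsto_const_nhds ?_
    (Eventually.of_forall fun t => (hlt t).le)
  filter_upwards [eventually_ge_atTop 0] with t ht
  linarith [h t ht]

theorem statement15 (L α : ℝ) (hL : 0 < L) (hα : 0 < α) (V : ℝ → ℝ)
    (hC2 : ContDiff ℝ 2 V) (hnn : ∀ t, 0 ≤ V t)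
    (hzero : V α = 0 ∧ V (-α) = 0 ∧ ∀ t, -α < t → t < α → 0 < V t)
    (hconv : 0 < deriv (deriv V) (-α) ∧ 0 < deriv (deriv V) α)
    (hV7 : ∃ d₁ d₂ d₃ d₄ : ℝ, 0 < d₁ ∧ 0 < d₂ ∧ 0 < d₃ ∧ 0 < d₄ ∧
      (∀ t, 0 ≤ t → t ≤ α →
        -(d₁ * t * |t - α|) ≤ deriv V t ∧ deriv V t ≤ -(d₂ * t * |t - α|)) ∧
      (∀ t, -α ≤ t → t ≤ 0 →
        -(d₃ * t * |t + α|) ≤ deriv V t ∧ deriv V t ≤ -(d₄ * t * |t + α|))) :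
    ∃ q : ℝ → ℝ, IsPhiLHeteroclinic L V α q ∧
      (∀ q' : ℝ → ℝ, IsPhiLHeteroclinic L V α q' → q' = q) ∧
      (∃ θ₁ θ₂ θ₃ θ₄ β₁ β₂ β₃ β₄ : ℝ,
        0 < θ₁ ∧ 0 < θ₂ ∧ 0 < θ₃ ∧ 0 < θ₄ ∧ 0 < β₁ ∧ 0 < β₂ ∧ 0 < β₃ ∧ 0 < β₄ ∧
        (∀ t : ℝ, 0 ≤ t →
          (0 < α - q t ∧ α - q t ≤ θ₁ * Real.exp (-θ₂ * t)) ∧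
          (0 < deriv q t ∧ deriv q t ≤ β₁ * Real.exp (-β₂ * t))) ∧
        (∀ t : ℝ, t ≤ 0 →
          (0 < α + q t ∧ α + q t ≤ θ₃ * Real.exp (θ₄ * t)) ∧
          (0 < deriv q t ∧ deriv q t ≤ β₃ * Real.exp (β₄ * t)))) ∧
      ((∀ t : ℝ, V t = (t ^ 2 - α ^ 2) ^ 2) → ∀ t : ℝ, 0 ≤ t →
        α * Real.tanh (Real.sqrt 2 * α * t) ≤ q t ∧
        q t ≤ α * Real.tanh (Real.sqrt 2 * α * t / Real.sqrt (yL L * (lL L - 1)))) := by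
  have hg := continuous_gL hL
  have hm0 := mL_pos hL
  have hm := mL_le_gL hL
  have hV : Differentiable ℝ V := hC2.differentiable (by norm_num)
  obtain ⟨p, K, hK, hp⟩ := exists_speed hα hg hm0 hm hC2 hnn hzero
  obtain ⟨q, ⟨hq0, hq⟩, huniq⟩ := scalar_exists hα hK (fun x hx => (hp x hx).1)
    (fun x hx => (hp x hx).2.2.1.continuousAt.continuousWithinAt)
    (fun x hx => (hp x hx).2.2.2.1) (fun x hx => (hp x hx).2.2.2.2)
  have hI : ∀ t, q t ∈ Ioo (-α) α := fun t => (hq t).1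
  have hqd : ∀ t, HasDerivAt q (p (q t)) t := fun t => (hq t).2
  have hdq : deriv q = fun t => p (q t) := funext fun t => (hqd t).deriv
  have hppos : ∀ t, 0 < p (q t) := fun t => (hp _ (hI t)).1
  have hmono : Monotone q := (strictMono_of_deriv_pos fun t => by rw [hdq]; exact hppos t).monotone
  have hnonneg : ∀ t, 0 ≤ t → 0 ≤ q t := fun t ht => hq0 ▸ hmono ht
  have hnonpos : ∀ t, t ≤ 0 → q t ≤ 0 := fun t ht => hq0 ▸ hmono ht
  have hup : ∀ t, V (q t) ≤ 1 / 2 * p (q t) ^ 2 := fun t => by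
    rw [← (hp _ (hI t)).2.1]
    exact energy_upper hg (gL_le_one hL) _
  obtain ⟨d₁, d₂, d₃, d₄, -, hd₂, hd₃, -, hVp, hVn⟩ := hV7
  set c₁ := sqrt (2 * (d₂ * α / 6)) with hc₁
  set c₂ := sqrt (2 * (d₃ * α / 6)) with hc₂
  have hc₁0 : 0 < c₁ := sqrt_pos.2 (by positivity)
  have hc₂0 : 0 < c₂ := sqrt_pos.2 (by positivity)
  have hlow₁ : ∀ t, 0 ≤ t → c₁ * (α - q t) ≤ p (q t) := by
    intro t ht
    refine speed_ge (by positivity) (hppos t) ((V_ge hd₂ hV hzero.1 ?_ (hnonneg t ht)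
      (hI t).2.le).trans (hup t))
    intro s hs hsα
    have := (hVp s hs hsα).2
    rwa [abs_sub_comm, abs_of_nonneg (by linarith)] at this
  -- the estimate on `(-∞, 0]` is the one on `[0, ∞)` for the reflected potential `s ↦ V (-s)`
  have hlow₂ : ∀ t, t ≤ 0 → c₂ * (α + q t) ≤ p (q t) := by
    intro t ht
    have hVr : ∀ s, HasDerivAt (fun s => V (-s)) (-deriv V (-s)) s := by
      intro s
      have h := (hV (-s)).hasDerivAt.comp s (hasDerivAt_neg s)
      rw [mul_neg, mul_one] at h
      exact h
    have := V_ge (V := fun s => V (-s)) hd₃ (fun s => (hVr s).differentiableAt) hzero.2.1 (by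
      intro s hs hsα
      rw [(hVr s).deriv]
      have := (hVn (-s) (by linarith) (by linarith)).1
      rw [abs_of_nonneg (by linarith)] at this
      linarith) (x := -q t) (by linarith [hnonpos t ht]) (by linarith [(hI t).1])
    rw [sub_neg_eq_add, neg_neg] at this
    exact speed_ge (by positivity) (hppos t) (this.trans (hup t))
  have hdec₁ : ∀ t, 0 ≤ t → α - q t ≤ α * exp (-c₁ * t) := fun t ht =>
    decay hq0 (fun s _ => hqd s) hlow₁ ht
  -- `s ↦ -q (-s)` solves the reflected problem
  have hdec₂' : ∀ t, 0 ≤ t → α - -q (-t) ≤ α * exp (-c₂ * t) := by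
    intro t ht
    refine decay (q := fun s => -q (-s)) (d := fun s => p (q (-s))) (by simp [hq0]) ?_ ?_ ht
    · intro s _
      have h := ((hqd (-s)).comp s (hasDerivAt_neg s)).neg
      rw [mul_neg, mul_one, neg_neg] at h
      exact h
    · intro s hs
      rw [sub_neg_eq_add]
      exact hlow₂ (-s) (by linarith)
  have hdec₂ : ∀ t, t ≤ 0 → α + q t ≤ α * exp (c₂ * t) := by
    intro t ht
    have := hdec₂' (-t) (by linarith)
    rwa [neg_neg, sub_neg_eq_add, neg_mul_neg] at this
  have htop : Tendsto q atTop (nhds α) := tendsto_of_decay hc₁0 (fun t => (hI t).2) hdec₁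
  have hbot : Tendsto q atBot (nhds (-α)) := by
    have h := (tendsto_of_decay (q := fun t => -q (-t)) hc₂0
      (fun t => by linarith [(hI (-t)).1]) hdec₂').neg.comp tendsto_neg_atBot_atTop
    simpa [Function.comp_def] using h
  have hqdd : ∀ t, HasDerivAt (deriv q) ((p (q t) * gL L (p (q t)))⁻¹ * deriv V (q t) * p (q t)) t := by
    intro t
    rw [hdq]
    exact (hp _ (hI t)).2.2.1.comp t (hqd t)
  have hdiff : Differentiable ℝ (deriv q) := fun t => (hqdd t).differentiableAt
  refine ⟨q, ⟨fun t => (hqd t).differentiableAt, fun t => ?_, hdiff, hdiff.continuous, hq0, htop,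
    hbot⟩, fun r hr => ?_, ?_, ?_⟩
  · refine HasDerivAt.congr_deriv ((hasDerivAt_psi hL (deriv q t)).comp t (hqdd t)) ?_
    have h1 := (hppos t).ne'
    have h2 := (hm0.trans_le (hm (p (q t)))).ne'
    rw [hdq]
    field_simp
  · exact huniq r (isPhiLHeteroclinic_first_order hL hα hC2 hnn hzero
      (fun x hx => ⟨(hp x hx).1, (hp x hx).2.1⟩) hr)
  · refine ⟨α, c₁, α, c₂, K * α, c₁, K * α, c₂, hα, hc₁0, hα, hc₂0, by positivity, hc₁0,
      by positivity, hc₂0, fun t ht => ⟨⟨by linarith [(hI t).2], hdec₁ t ht⟩, ?_⟩,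
      fun t ht => ⟨⟨by linarith [(hI t).1], hdec₂ t ht⟩, ?_⟩⟩
    · rw [hdq, mul_assoc]
      exact ⟨hppos t, (hp _ (hI t)).2.2.2.1.trans (mul_le_mul_of_nonneg_left (hdec₁ t ht) hK.le)⟩
    · rw [hdq, mul_assoc]
      exact ⟨hppos t, (hp _ (hI t)).2.2.2.2.trans (mul_le_mul_of_nonneg_left (hdec₂ t ht) hK.le)⟩
  · intro hVeq t ht
    have hw : ∀ s, V (q s) = ((α - q s) * (α + q s)) ^ 2 := fun s => by rw [hVeq]; ring
    constructor
    · refine tanh_lower hα hq0 (fun s _ => hqd s) (fun s _ => (hI s).2) (fun s _ => ?_) ht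
      have := speed_ge (c := 1) one_pos (hppos s) (by rw [one_mul, ← hw]; exact hup s)
      rwa [mul_one] at this
    · set m := yL L * (lL L - 1) with hmdef
      have hsm : 0 < sqrt m := sqrt_pos.2 hm0
      rw [show sqrt 2 * α * t / sqrt m = sqrt 2 / sqrt m * α * t by ring]
      refine tanh_upper hα hq0 (fun s _ => hqd s) (fun s _ => (hI s).2) (fun s _ => ?_) ht
      have h1 := energy_lower hg hm (p (q s))
      rw [(hp _ (hI s)).2.1, hw] at h1
      have h2 : 0 ≤ (α - q s) * (α + q s) :=
        mul_nonneg (by linarith [(hI s).2]) (by linarith [(hI s).1])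
      refine (le_abs_self _).trans (abs_le_of_sq_le_sq ?_ (by positivity))
      rw [mul_pow, div_pow, sq_sqrt hm0.le, sq_sqrt two_pos.le, div_mul_eq_mul_div,
        le_div_iff₀ hm0]
      linarith
end
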